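/- arXiv:1407.7454 — 13 statements merged into one kernel-verified Lean document; each statement's English description precedes it below -/
import Mathlib

section
/- Let n be odd and let B ∈ GL(n,ℤ) have determinant 1 and order exactly 2^r for some r ≥ 1. Then the characteristic polynomial of B factors in ℤ[X] as p_B(X) = (X − 1)^{c_1} · ∏_{k=1}^{r} (X^{2^{k−1}} + 1)^{c_{2^k}} for natural numbers c_1, c_2, c_4, …, c_{2^r} with c_1 ≥ 1 and c_{2^r} ≥ 1, and n = c_1 + ∑_{k=1}^{r} 2^{k−1} c_{2^k}. -/
open Polynomial in
lemma aux_cyclo (k : ℕ) : cyclotomic (2 ^ (k + 1)) ℤ = X ^ (2 ^ k) + 1 := by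
  rw [cyclotomic_prime_pow_eq_geom_sum Nat.prime_two]
  simp [Finset.sum_range_succ, add_comm]

open Polynomial in
lemma aux_factor (r : ℕ) : ∀ (d : ℕ) (p : ℤ[X]), p.natDegree = d → p.Monic →
    (∀ z : ℂ, aeval z p = 0 → z ^ (2 ^ r) = 1) →
    ∃ c : ℕ → ℕ, p = ∏ k ∈ Finset.range (r + 1), cyclotomic (2 ^ k) ℤ ^ c k := by
  intro d
  induction d using Nat.strong_induction_on with
  | _ d ih =>
  intro p hd hp hz
  rcases Nat.eq_zero_or_pos d with h0 | hpos
  · refine ⟨fun _ => 0, ?_⟩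
    rw [h0] at hd
    simpa using hp.natDegree_eq_zero.mp hd
  · have hdeg : (p.map (algebraMap ℤ ℂ)).degree ≠ 0 := by
      rw [hp.degree_map, degree_eq_natDegree hp.ne_zero, hd]
      exact_mod_cast hpos.ne'
    obtain ⟨z, hzr⟩ := IsAlgClosed.exists_root _ hdeg
    have hz0 : aeval z p = 0 := by
      rw [IsRoot.def, eval_map_algebraMap] at hzr
      exact hzr
    have hz1 := hz z hz0
    obtain ⟨k, hk, hkz⟩ := (Nat.dvd_prime_pow Nat.prime_two).mp (orderOf_dvd_of_pow_eq_one hz1)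
    have hprim : IsPrimitiveRoot z (2 ^ k) := hkz ▸ IsPrimitiveRoot.orderOf z
    have hkpos : 0 < 2 ^ k := by positivity
    have hdvd : cyclotomic (2 ^ k) ℤ ∣ p := by
      rw [cyclotomic_eq_minpoly hprim hkpos]
      exact minpoly.isIntegrallyClosed_dvd (hprim.isIntegral hkpos) hz0
    obtain ⟨q, rfl⟩ := hdvd
    have hc := cyclotomic.monic (2 ^ k) ℤ
    have hq : q.Monic := hc.of_mul_monic_left hp
    have hlt : q.natDegree < d := by
      rw [hc.natDegree_mul hq, natDegree_cyclotomic] at hd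
      have := Nat.totient_pos.mpr hkpos
      omega
    obtain ⟨c, hcq⟩ := ih _ hlt q rfl hq (fun w hw => hz w (by simp [hw]))
    refine ⟨fun j => c j + if j = k then 1 else 0, ?_⟩
    simp_rw [pow_add]
    rw [Finset.prod_mul_distrib, ← hcq, mul_comm]
    congr 1
    simp [pow_ite, Finset.prod_ite_eq', Nat.lt_succ_of_le hk]

lemma aux_dvd {k s : ℕ} (h : k ≤ s) :
    (Polynomial.X ^ (2 ^ k) - 1 : Polynomial ℤ) ∣ Polynomial.X ^ (2 ^ s) - 1 := by
  obtain ⟨t, rfl⟩ := Nat.exists_eq_add_of_le h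
  rw [pow_add, pow_mul]
  simpa using sub_dvd_pow_sub_pow (Polynomial.X ^ 2 ^ k : Polynomial ℤ) 1 (2 ^ t)


/-- **Characteristic polynomial of an order `2^r` integral matrix with `det = 1` in odd size.**
Let `n` be odd and let `B ∈ GL(n,ℤ)` have determinant `1` and order exactly `2^r`, `r ≥ 1`.
Then `p_B(X) = (X − 1)^(c 0) * ∏_{k=1}^{r} (X^(2^(k−1)) + 1)^(c k)` in `ℤ[X]` for natural
numbers `c 0, c 1, …, c r` (here `c k` is the exponent of the `2^k`-th cyclotomic polynomial)
with `c 0 ≥ 1` and `c r ≥ 1`, and `n = c 0 + ∑_{k=1}^{r} 2^(k−1) * c k`. -/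
theorem charpoly_of_orderOf_eq_two_pow
    (n r : ℕ) (hn : Odd n) (hr : 1 ≤ r) (B : GL (Fin n) ℤ)
    (hdet : Matrix.det (B : Matrix (Fin n) (Fin n) ℤ) = 1)
    (hord : orderOf B = 2 ^ r) :
    ∃ c : ℕ → ℕ, 1 ≤ c 0 ∧ 1 ≤ c r ∧
      Matrix.charpoly (B : Matrix (Fin n) (Fin n) ℤ) =
        (Polynomial.X - 1) ^ (c 0) *
          ∏ k ∈ Finset.Icc 1 r, (Polynomial.X ^ (2 ^ (k - 1)) + 1) ^ (c k) ∧
      n = c 0 + ∑ k ∈ Finset.Icc 1 r, 2 ^ (k - 1) * c k := by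
  classical
  have : NeZero n := ⟨by rintro rfl; simp at hn⟩
  set f : Matrix (Fin n) (Fin n) ℤ →+* Matrix (Fin n) (Fin n) ℂ :=
    (algebraMap ℤ ℂ).mapMatrix with hf
  have hfinj : Function.Injective f :=
    fun a b h => Matrix.map_injective (RingHom.injective_int (algebraMap ℤ ℂ)) h
  set C := f B.1 with hC
  have hroot : ∀ z : ℂ, z ∈ spectrum ℂ C ↔ Polynomial.aeval z B.1.charpoly = 0 := by
    intro z
    rw [Matrix.mem_spectrum_iff_isRoot_charpoly, hC, hf, RingHom.mapMatrix_apply,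
      Matrix.charpoly_map, Polynomial.IsRoot.def, Polynomial.eval_map_algebraMap]
  have hBpow : ∀ N, C ^ N = 1 ↔ B ^ N = 1 := by
    intro N
    rw [hC, ← map_pow, ← map_one f, hfinj.eq_iff, ← Units.val_pow_eq_pow_val, Units.val_eq_one]
  have hCN : C ^ (2 ^ r) = 1 := (hBpow _).2 (hord ▸ pow_orderOf_eq_one B)
  obtain ⟨c, hc⟩ := aux_factor r _ B.1.charpoly rfl (Matrix.charpoly_monic _) (by
    intro z hz
    have := spectrum.pow_mem_pow C (2 ^ r) ((hroot z).2 hz)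
    rw [hCN, spectrum.one_eq] at this
    simpa using this)
  obtain ⟨s, rfl⟩ : ∃ s, r = s + 1 := ⟨r - 1, by omega⟩
  have hCm : C ^ (2 ^ s) ≠ 1 := by
    rw [Ne, hBpow]
    intro h
    have h1 := orderOf_dvd_of_pow_eq_one h
    rw [hord] at h1
    have := (Nat.pow_dvd_pow_iff_le_right (by norm_num : 1 < 2)).mp h1
    omega
  have hmem : (-1 : ℂ) ∈ spectrum ℂ (C ^ (2 ^ s)) := by
    by_contra hns
    rw [spectrum.notMem_iff] at hns
    apply hCm
    have h2 : (algebraMap ℂ (Matrix (Fin n) (Fin n) ℂ) (-1) - C ^ (2 ^ s)) *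
        (1 - C ^ (2 ^ s)) = 0 := by
      rw [pow_succ, pow_mul, pow_two] at hCN
      rw [map_neg, map_one]
      have : (-1 - C ^ 2 ^ s) * (1 - C ^ 2 ^ s) = C ^ 2 ^ s * C ^ 2 ^ s - 1 := by noncomm_ring
      rw [this, hCN, sub_self]
    exact (sub_eq_zero.mp (hns.mul_right_eq_zero.mp h2)).symm
  rw [spectrum.map_pow_of_pos C (by positivity)] at hmem
  obtain ⟨w, hw, hw1⟩ := hmem
  rw [hroot] at hw
  replace hw1 : w ^ 2 ^ s = -1 := hw1
  have hform : B.1.charpoly = (Polynomial.X - 1) ^ (c 0) *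
      ∏ k ∈ Finset.Icc 1 (s + 1), (Polynomial.X ^ (2 ^ (k - 1)) + 1) ^ (c k) := by
    rw [hc, Finset.prod_range_succ', mul_comm]
    congr 1
    · simp
    · rw [← Finset.Ico_add_one_right_eq_Icc, Finset.prod_Ico_eq_prod_range]
      apply Finset.prod_congr rfl
      intro k _
      rw [aux_cyclo, Nat.add_sub_cancel_left, add_comm 1 k]
  refine ⟨c, ?_, ?_, hform, ?_⟩
  · by_contra h0
    have h0 : c 0 = 0 := by omega
    have h1 := Matrix.det_eq_sign_charpoly_coeff B.1
    rw [hdet, Polynomial.coeff_zero_eq_eval_zero, hform, h0, Fintype.card_fin, hn.neg_one_pow,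
      Polynomial.eval_mul, Polynomial.eval_prod, Finset.prod_eq_one] at h1
    · simp at h1
    · intro k _
      simp
  · by_contra h0
    have h0 : c (s + 1) = 0 := by omega
    rw [hc, Finset.prod_range_succ, h0, pow_zero, mul_one, map_prod, Finset.prod_eq_zero_iff] at hw
    obtain ⟨k, hk, hk0⟩ := hw
    rw [map_pow] at hk0
    have hk1 := eq_zero_of_pow_eq_zero hk0
    have hd : Polynomial.cyclotomic (2 ^ k) ℤ ∣ Polynomial.X ^ (2 ^ s) - 1 :=
      (Polynomial.cyclotomic.dvd_X_pow_sub_one _ _).trans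
        (aux_dvd (Nat.lt_succ_iff.mp (Finset.mem_range.mp hk)))
    obtain ⟨q, hq⟩ := hd
    have := congrArg (Polynomial.aeval w) hq
    rw [map_mul, hk1, zero_mul] at this
    simp [hw1] at this
    norm_num at this
  · have h1 := Matrix.charpoly_natDegree_eq_dim B.1
    rw [hform, Fintype.card_fin] at h1
    have hm : ∀ k : ℕ, (Polynomial.X ^ (2 ^ (k - 1)) + 1 : Polynomial ℤ).Monic := fun k =>
      Polynomial.monic_X_pow_add_C (1 : ℤ) (by positivity)
    have hd : ∀ k : ℕ, (Polynomial.X ^ (2 ^ (k - 1)) + 1 : Polynomial ℤ).natDegree = 2 ^ (k - 1) :=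
      fun k => Polynomial.natDegree_X_pow_add_C (r := (1 : ℤ))
    have hx : (Polynomial.X - 1 : Polynomial ℤ).Monic := Polynomial.monic_X_sub_C (1 : ℤ)
    have hxd : (Polynomial.X - 1 : Polynomial ℤ).natDegree = 1 := Polynomial.natDegree_X_sub_C (1 : ℤ)
    rw [(hx.pow _).natDegree_mul (Polynomial.monic_prod_of_monic _ _ fun k _ => (hm k).pow _),
      hx.natDegree_pow, Polynomial.natDegree_prod_of_monic _ _ (fun k _ => (hm k).pow _), hxd] at h1
    simp_rw [(hm _).natDegree_pow, hd] at h1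
    rw [← h1]
    simp [mul_comm]
end

section
/- Let N be an even positive integer and k an odd positive integer. Then ∑_{j odd, 1 ≤ j ≤ N−1} ⌊jk/N⌋ = (k−1)N/4, which is an integer. In particular, if N = 2^r with r ≥ 2, then this sum is an even integer. -/
theorem card_odd_aux (m : ℕ) :
    ((Finset.range (m + m)).filter (fun j => Odd j)).card = m := by
  induction m with
  | zero => simp
  | succ n ih =>
    have e : n + 1 + (n + 1) = (n + n) + 1 + 1 := by ring
    have h1 : ¬ Odd (n + n) := by rw [Nat.not_odd_iff_even]; exact ⟨n, rfl⟩
    have h2 : Odd (n + n + 1) := ⟨n, by ring⟩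
    rw [e, Finset.range_add_one, Finset.filter_insert, if_pos h2, Finset.range_add_one,
      Finset.filter_insert, if_neg h1, Finset.card_insert_of_notMem (by simp), ih]

theorem floor_pair_aux (N k j : ℕ) (hN : Even N) (hk : Odd k) (hj : j < N) (hjo : Odd j) :
    (j * k) / N + ((N - j) * k) / N = k - 1 := by
  have hN0 : 0 < N := by omega
  obtain ⟨i, rfl⟩ : ∃ i, N = j + i := ⟨N - j, by omega⟩
  rw [Nat.add_sub_cancel_left]
  have a1 := Nat.div_add_mod (j * k) (j + i)
  have a2 := Nat.div_add_mod (i * k) (j + i)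
  have b1 := Nat.mod_lt (j * k) hN0
  have b2 := Nat.mod_lt (i * k) hN0
  have c1 : (j * k) % (j + i) ≠ 0 := by
    intro h
    have hd : (2 : ℕ) ∣ j * k := hN.two_dvd.trans (Nat.dvd_of_mod_eq_zero h)
    have ho := hjo.mul hk
    rw [Nat.odd_iff] at ho
    omega
  generalize (j * k) / (j + i) = p at *
  generalize (i * k) / (j + i) = q at *
  generalize (j * k) % (j + i) = r at *
  generalize (i * k) % (j + i) = s at *
  have e : (j + i) * (p + q) + (r + s) = (j + i) * k := by linarith
  have l1 : p + q < k := by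
    by_contra h
    have := Nat.mul_le_mul_left (j + i) (not_lt.mp h)
    omega
  have l2 : k < p + q + 2 := by
    by_contra h
    have := Nat.mul_le_mul_left (j + i) (not_lt.mp h)
    rw [Nat.mul_add] at this
    omega
  omega

/-- **Sum of floors `⌊jk/N⌋` over odd `j`.**
Let `N` be an even positive integer and `k` an odd positive integer.  Then
`∑_{j odd, 1 ≤ j ≤ N−1} ⌊jk/N⌋ = (k−1)N/4`, an integer (stated as `4 * sum = (k-1) * N`).
In particular, if `N = 2^r` with `r ≥ 2`, then this sum is even. -/
theorem four_mul_sum_floor_odd_eq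
    (N k : ℕ) (hN : Even N) (hN0 : 0 < N) (hk : Odd k) (hk0 : 0 < k) :
    4 * (∑ j ∈ (Finset.range N).filter (fun j => Odd j), (j * k) / N) = (k - 1) * N ∧
    (∀ r : ℕ, 2 ≤ r → N = 2 ^ r →
      Even (∑ j ∈ (Finset.range N).filter (fun j => Odd j), (j * k) / N)) := by
  have key : 4 * (∑ j ∈ (Finset.range N).filter (fun j => Odd j), (j * k) / N) = (k - 1) * N := by
    have hr : (∑ j ∈ (Finset.range N).filter (fun j => Odd j), (j * k) / N)
        = ∑ j ∈ (Finset.range N).filter (fun j => Odd j), ((N - j) * k) / N := by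
      have hm : ∀ j ∈ (Finset.range N).filter (fun j => Odd j),
          N - j ∈ (Finset.range N).filter (fun j => Odd j) := by
        intro j hj
        simp only [Finset.mem_filter, Finset.mem_range, Nat.odd_iff] at hj ⊢
        rw [Nat.even_iff] at hN
        omega
      have hi : ∀ j ∈ (Finset.range N).filter (fun j => Odd j), N - (N - j) = j := by
        intro j hj
        simp only [Finset.mem_filter, Finset.mem_range] at hj
        omega
      refine Finset.sum_nbij' (fun j => N - j) (fun j => N - j) hm hm hi hi ?_
      intro j hj
      simp only [hi j hj]
    have h2 : (∑ j ∈ (Finset.range N).filter (fun j => Odd j), (j * k) / N)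
        + (∑ j ∈ (Finset.range N).filter (fun j => Odd j), ((N - j) * k) / N)
        = ((Finset.range N).filter (fun j => Odd j)).card * (k - 1) := by
      rw [← Finset.sum_add_distrib, ← smul_eq_mul, ← Finset.sum_const]
      refine Finset.sum_congr rfl fun j hj => ?_
      simp only [Finset.mem_filter, Finset.mem_range] at hj
      exact floor_pair_aux N k j hN hk hj.1 hj.2
    rw [← hr] at h2
    obtain ⟨m, rfl⟩ := hN
    rw [card_odd_aux] at h2
    linarith
  refine ⟨key, ?_⟩
  intro r hr hNr
  obtain ⟨s, rfl⟩ : ∃ s, r = 2 + s := ⟨r - 2, by omega⟩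
  obtain ⟨t, rfl⟩ := hk
  generalize (∑ j ∈ (Finset.range N).filter (fun j => Odd j), (j * (2 * t + 1)) / N) = S at *
  rw [hNr, pow_add, Nat.add_sub_cancel] at key
  exact ⟨t * 2 ^ s, by linarith⟩
end

section
/- Let r ≥ 2 be an integer and k an odd positive integer. Then ∏_{j ∈ I_{2^r}^*} sin(jkπ/2^r) = 1 / 2^{2^{r−1} − 1}, where the product is over the odd integers j with 1 ≤ j ≤ 2^r − 1. -/
theorem aux_step (k : ℕ) (hc : Real.cos (k * Real.pi / 2) = 0) (m : ℕ) (x : ℝ) :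
    (∏ i ∈ Finset.range (2 ^ (m + 1)), Real.sin (x + i * k * Real.pi / 2 ^ (m + 1))) * 2 ^ (2 ^ m)
      = Real.sin (k * Real.pi / 2) ^ (2 ^ m) *
        ∏ i ∈ Finset.range (2 ^ m), Real.sin (2 * x + i * k * Real.pi / 2 ^ m) := by
  have h2 : (2 : ℕ) ^ (m + 1) = 2 ^ m + 2 ^ m := by ring
  rw [h2, Finset.prod_range_add, ← Finset.prod_mul_distrib]
  have e1 : ∀ a : ℝ, a ^ (2 ^ m) = ∏ _i ∈ Finset.range (2 ^ m), a := by
    intro a; simp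
  rw [e1 2, e1 (Real.sin _), ← Finset.prod_mul_distrib, ← Finset.prod_mul_distrib]
  refine Finset.prod_congr rfl fun i _ => ?_
  have ha : x + ((2 ^ m + i : ℕ) : ℝ) * k * Real.pi / 2 ^ (m + 1)
      = (x + i * k * Real.pi / 2 ^ (m + 1)) + k * Real.pi / 2 := by
    push_cast; field_simp; ring
  have hb : 2 * x + i * k * Real.pi / 2 ^ m = 2 * (x + i * k * Real.pi / 2 ^ (m + 1)) := by
    field_simp; ring
  rw [ha, hb, Real.sin_add _ (k * Real.pi / 2), hc, Real.sin_two_mul]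
  ring

theorem aux_main (k : ℕ) (hc : Real.cos (k * Real.pi / 2) = 0) (m : ℕ) : ∀ x : ℝ,
    (∏ i ∈ Finset.range (2 ^ (m + 1)), Real.sin (x + i * k * Real.pi / 2 ^ (m + 1)))
        * 2 ^ (2 ^ (m + 1) - 1)
      = Real.sin (k * Real.pi / 2) * Real.sin (2 ^ (m + 1) * x) := by
  induction m with
  | zero =>
    intro x
    have := aux_step k hc 0 x
    simpa using this
  | succ m ih =>
    intro x
    have h := aux_step k hc (m + 1) x
    have hs : Real.sin (k * Real.pi / 2) ^ (2 ^ (m + 1)) = 1 := by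
      have := Real.sin_sq_add_cos_sq (k * Real.pi / 2)
      rw [pow_succ', pow_mul]
      rw [hc] at this
      have h1 : Real.sin (k * Real.pi / 2) ^ 2 = 1 := by linarith
      rw [h1, one_pow]
    have hp : 2 ^ (m + 1 + 1) - 1 = 2 ^ (m + 1) + (2 ^ (m + 1) - 1) := by
      have := Nat.one_le_two_pow (n := m + 1)
      rw [pow_succ 2 (m + 1)]; omega
    rw [hp, pow_add (2 : ℝ) (2 ^ (m + 1)), ← mul_assoc, h, hs, one_mul, ih (2 * x)]
    congr 2
    ring

open Real in
/-- **Product of sines at odd multiples of `kπ/2^r`.**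
Let `r ≥ 2` be an integer and `k` an odd positive integer.  Then
`∏_{j ∈ I_{2^r}^*} sin(jkπ/2^r) = 1 / 2^(2^(r−1) − 1)`,
where the product is over the odd integers `j` with `1 ≤ j ≤ 2^r − 1`. -/
theorem prod_sin_odd_mul_odd (r k : ℕ) (hr : 2 ≤ r) (hk : Odd k) (hk0 : 0 < k) :
    ∏ j ∈ (Finset.range (2 ^ r)).filter (fun j => Odd j),
        Real.sin (j * k * π / 2 ^ r) = 1 / 2 ^ (2 ^ (r - 1) - 1) := by
  obtain ⟨m, rfl⟩ : ∃ m, r = m + 2 := ⟨r - 2, by omega⟩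
  have hc : Real.cos (k * π / 2) = 0 := by
    obtain ⟨t, rfl⟩ := hk
    rw [Real.cos_eq_zero_iff]
    exact ⟨t, by push_cast; ring⟩
  have hset : (Finset.range (2 ^ (m + 2))).filter (fun j => Odd j)
      = (Finset.range (2 ^ (m + 1))).image (fun i => 2 * i + 1) := by
    have h2 : (2 : ℕ) ^ (m + 2) = 2 * 2 ^ (m + 1) := by ring
    ext j
    simp only [Finset.mem_filter, Finset.mem_range, Finset.mem_image, h2]
    constructor
    · rintro ⟨h, t, rfl⟩
      exact ⟨t, by omega, rfl⟩
    · rintro ⟨t, h, rfl⟩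
      exact ⟨by omega, t, rfl⟩
  rw [hset, Finset.prod_image (by intro a _ b _ h; simp only at h; omega)]
  have h := aux_main k hc m (k * π / 2 ^ (m + 2))
  have hx : (2 : ℝ) ^ (m + 1) * (k * π / 2 ^ (m + 2)) = k * π / 2 := by
    field_simp; ring
  have hs := Real.sin_sq_add_cos_sq (k * π / 2)
  rw [hc] at hs
  rw [hx] at h
  rw [show m + 2 - 1 = m + 1 from rfl, eq_div_iff (by positivity)]
  have h1 : Real.sin (k * π / 2) * Real.sin (k * π / 2) = 1 := by nlinarith
  rw [h1] at h
  rw [← h]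
  congr 1
  refine Finset.prod_congr rfl fun i _ => ?_
  congr 1
  push_cast
  field_simp
  ring
end

section
/- Let r ≥ 1 and ν ≥ 0 be integers, t ∈ ℤ with t ≤ r, and ℓ an odd integer. Define 𝒮_{r,t}(ω) = ∑_{k ∈ I_{2^r}^*} (−1)^{⌊k/2⌋} sin(kωπ/2^t) for ω ∈ ℤ, the sum being over the odd integers k with 1 ≤ k ≤ 2^r − 1. Then 𝒮_{r,t}(2^ν ℓ) = (−1)^{⌊ℓ/2⌋} · 2^{r−1} if t = ν + 1, and 𝒮_{r,t}(2^ν ℓ) = 0 if t ≠ ν + 1. -/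
theorem aux_reindex (f : ℕ → ℝ) (M : ℕ) :
    (∑ k ∈ (Finset.range (2 * M)).filter (fun k => Odd k), f k) =
      ∑ j ∈ Finset.range M, f (2 * j + 1) := by
  rw [Finset.sum_filter]
  induction M with
  | zero => simp
  | succ n ih =>
    rw [show 2 * (n + 1) = 2 * n + 1 + 1 by ring, Finset.sum_range_succ, Finset.sum_range_succ, ih,
      Finset.sum_range_succ]
    have h1 : ¬ Odd (2 * n) := by simp
    have h2 : Odd (2 * n + 1) := ⟨n, rfl⟩
    rw [if_neg h1, if_pos h2, add_zero]

theorem aux_telescope (θ : ℝ) (M : ℕ) :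
    2 * Real.cos θ * (∑ j ∈ Finset.range M, (-1 : ℝ) ^ j * Real.sin ((2 * j + 1) * θ)) =
      - (-1) ^ M * Real.sin (2 * M * θ) := by
  induction M with
  | zero => simp
  | succ n ih =>
    rw [Finset.sum_range_succ, mul_add, ih]
    have e1 : (2 * (n : ℝ)) * θ = (2 * n + 1) * θ - θ := by ring
    have e2 : (2 * ((n + 1 : ℕ) : ℝ)) * θ = (2 * n + 1) * θ + θ := by push_cast; ring
    rw [e1, e2, Real.sin_sub, Real.sin_add]
    ring

open Real in
/-- **Alternating sums of sines `𝒮_{r,t}(2^ν ℓ)`.**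
Let `r ≥ 1` and `ν ≥ 0` be integers, `t ∈ ℤ` with `t ≤ r`, and `ℓ` an odd integer.  With
`𝒮_{r,t}(ω) = ∑_{k ∈ I_{2^r}^*} (−1)^⌊k/2⌋ sin(kωπ/2^t)` (sum over odd `k`, `1 ≤ k ≤ 2^r − 1`),
we have `𝒮_{r,t}(2^ν ℓ) = (−1)^⌊ℓ/2⌋ · 2^(r−1)` if `t = ν + 1`, and `= 0` otherwise. -/
theorem alternating_sum_sin_two_pow
    (r ν : ℕ) (hr : 1 ≤ r) (t : ℤ) (ht : t ≤ (r : ℤ)) (ℓ : ℤ) (hℓ : Odd ℓ) :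
    (∑ k ∈ (Finset.range (2 ^ r)).filter (fun k => Odd k),
        (-1 : ℝ) ^ (k / 2) *
          Real.sin ((k : ℝ) * (((2 ^ ν * ℓ : ℤ) : ℝ)) * π / (2 : ℝ) ^ t)) =
      if t = (ν : ℤ) + 1 then (-1 : ℝ) ^ (Int.fdiv ℓ 2) * 2 ^ (r - 1) else 0 := by
  obtain ⟨s, rfl⟩ : ∃ s, r = s + 1 := ⟨r - 1, by omega⟩
  have hpos : ∀ z : ℤ, (2 : ℝ) ^ z ≠ 0 := fun z => zpow_ne_zero _ two_ne_zero
  rw [pow_succ' 2 s, aux_reindex]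
  have hsum : ∀ j ∈ Finset.range (2 ^ s), (-1 : ℝ) ^ ((2 * j + 1) / 2) *
      Real.sin (((2 * j + 1 : ℕ) : ℝ) * (((2 ^ ν * ℓ : ℤ) : ℝ)) * π / (2 : ℝ) ^ t) =
      (-1 : ℝ) ^ j * Real.sin ((2 * j + 1) * ((2 : ℝ) ^ ν * ℓ * π / (2 : ℝ) ^ t)) := by
    intro j _
    rw [show (2 * j + 1) / 2 = j by omega]
    congr 2
    push_cast
    ring
  rw [Finset.sum_congr rfl hsum]
  split_ifs with h
  · obtain ⟨m, rfl⟩ := hℓ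
    have hf : Int.fdiv (2 * m + 1) 2 = m := by
      rw [Int.fdiv_eq_ediv_of_nonneg _ (by norm_num)]; omega
    rw [hf]
    have hθ : (2 : ℝ) ^ ν * ((2 * m + 1 : ℤ) : ℝ) * π / (2 : ℝ) ^ t = (2 * m + 1) * π / 2 := by
      rw [h, zpow_add₀ two_ne_zero, zpow_natCast, zpow_one]
      push_cast
      field_simp
    rw [hθ]
    have : ∀ j ∈ Finset.range (2 ^ s),
        (-1 : ℝ) ^ j * Real.sin ((2 * j + 1) * ((2 * m + 1) * π / 2)) = (-1 : ℝ) ^ m := by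
      intro j _
      have e : (2 * (j : ℝ) + 1) * ((2 * m + 1) * π / 2) =
          π / 2 + ((2 * (m * j) + m + j : ℤ) : ℝ) * π := by push_cast; ring
      have hn : (-1 : ℝ) ≠ 0 := by norm_num
      rw [e, Real.sin_add_int_mul_pi, Real.sin_pi_div_two, mul_one, zpow_add₀ hn, zpow_add₀ hn,
        zpow_mul, zpow_natCast]
      have : (-1 : ℝ) ^ j * (-1) ^ j = 1 := by rw [← mul_pow]; norm_num
      have h2 : ((-1 : ℝ) ^ (2 : ℤ)) = 1 := by norm_num
      rw [h2, one_zpow, one_mul]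
      linear_combination (-1 : ℝ) ^ m * this
    rw [Finset.sum_congr rfl this]
    simp [mul_comm]
  · set θ : ℝ := (2 : ℝ) ^ ν * ℓ * π / (2 : ℝ) ^ t with hθ
    have htel := aux_telescope θ (2 ^ s)
    obtain ⟨d, hd⟩ : ∃ d : ℕ, (s : ℤ) + 1 = t + d :=
      ⟨((s : ℤ) + 1 - t).toNat, by push_cast at ht; omega⟩
    have hz : (2 * ((2 ^ s : ℕ) : ℝ)) = (2 : ℝ) ^ t * 2 ^ d := by
      rw [← zpow_natCast 2 d, ← zpow_add₀ two_ne_zero, ← hd, zpow_add₀ two_ne_zero]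
      push_cast
      rw [zpow_natCast, zpow_one, mul_comm]
    have hsin : Real.sin (2 * ((2 ^ s : ℕ) : ℝ) * θ) = 0 := by
      have : 2 * ((2 ^ s : ℕ) : ℝ) * θ = ((2 ^ d * 2 ^ ν * ℓ : ℤ) : ℝ) * π := by
        rw [hz, hθ]
        have := hpos t
        push_cast
        field_simp
      rw [this, Real.sin_int_mul_pi]
    rw [hsin, mul_zero] at htel
    have hcos : Real.cos θ ≠ 0 := by
      intro hc
      obtain ⟨n, hn⟩ := Real.cos_eq_zero_iff.1 hc
      have hp := hpos t
      have hpi := Real.pi_ne_zero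
      have key : (2 : ℝ) ^ ν * 2 * ℓ = (2 * n + 1) * (2 : ℝ) ^ t := by
        rw [hθ] at hn
        field_simp at hn
        linear_combination hn
      rcases lt_or_gt_of_ne h with hlt | hgt
      · obtain ⟨c, hc⟩ : ∃ c : ℕ, (ν : ℤ) + 1 = t + (c + 1 : ℕ) :=
          ⟨((ν : ℤ) - t).toNat, by omega⟩
        have e : (2 : ℝ) ^ ν * 2 = (2 : ℝ) ^ t * 2 ^ (c + 1) := by
          rw [← zpow_natCast 2 (c + 1), ← zpow_add₀ two_ne_zero, ← hc, zpow_add₀ two_ne_zero,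
            zpow_natCast, zpow_one]
        rw [e] at key
        have k2 : (2 : ℝ) ^ (c + 1) * ℓ = 2 * n + 1 := by
          apply mul_left_cancel₀ hp; linear_combination key
        have k3 : (2 : ℤ) ^ (c + 1) * ℓ = 2 * n + 1 := by exact_mod_cast k2
        rw [pow_succ', mul_assoc] at k3
        omega
      · obtain ⟨c, hc⟩ : ∃ c : ℕ, t = (ν : ℤ) + 1 + (c + 1 : ℕ) :=
          ⟨(t - ν - 2).toNat, by omega⟩
        have e : (2 : ℝ) ^ t = (2 : ℝ) ^ ν * 2 * 2 ^ (c + 1) := by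
          rw [hc, zpow_add₀ two_ne_zero, zpow_add₀ two_ne_zero, zpow_natCast, zpow_natCast,
            zpow_one]
        rw [e] at key
        have k2 : (ℓ : ℝ) = (2 * n + 1) * 2 ^ (c + 1) := by
          have : (2 : ℝ) ^ ν * 2 ≠ 0 := by positivity
          apply mul_left_cancel₀ this; linear_combination key
        have k3 : ℓ = 2 * ((2 * n + 1) * 2 ^ c) := by
          have : ℓ = (2 * n + 1) * 2 ^ (c + 1) := by exact_mod_cast k2
          rw [this]; ring
        obtain ⟨m, hm⟩ := hℓ
        omega
    rcases mul_eq_zero.1 htel with h0 | h0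
    · exact absurd h0 (mul_ne_zero two_ne_zero hcos)
    · exact h0
end

section
/- Let r ≥ 3 be an integer and k an odd positive integer. Then ∏_{j ∈ I_{2^{r−1}}^*} cot(jkπ/2^r) = 1, where the product is over the odd integers j with 1 ≤ j ≤ 2^{r−1} − 1 (equivalently 1 ≤ j ≤ 2^{r−1}). (Note: each angle jkπ/2^r is not an integer multiple of π, so every cotangent is defined.) -/
open Real in
/-- **Product of cotangents at odd multiples of `kπ/2^r`.**
Let `r ≥ 3` be an integer and `k` an odd positive integer.  Then
`∏_{j ∈ I_{2^{r−1}}^*} cot(jkπ/2^r) = 1`, where the product is over the odd integers `j`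
with `1 ≤ j ≤ 2^(r−1) − 1` (equivalently `1 ≤ j ≤ 2^(r−1)`). -/
theorem prod_cot_odd_eq_one (r k : ℕ) (hr : 3 ≤ r) (hk : Odd k) (hk0 : 0 < k) :
    ∏ j ∈ (Finset.range (2 ^ (r - 1))).filter (fun j => Odd j),
        Real.cot (j * k * π / 2 ^ r) = 1 := by
  obtain ⟨s, rfl⟩ : ∃ s, r = s + 3 := ⟨r - 3, by omega⟩
  have e : s + 3 - 1 = s + 2 := by omega
  rw [e]
  have hp : 2 ^ (s + 2) = 2 * (2 * 2 ^ s) := by ring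
  refine Finset.prod_involution (fun j _ => 2 ^ (s + 2) - j) ?_ ?_ ?_ ?_
  · intro j hj
    rw [Finset.mem_filter, Finset.mem_range] at hj
    obtain ⟨hlt, hodd⟩ := hj
    have hpr : ((2 : ℝ) ^ (s + 3)) ≠ 0 := by positivity
    have h2 : Real.sin (2 * (j * k * π / 2 ^ (s + 3))) ≠ 0 := by
      intro h0
      rw [Real.sin_eq_zero_iff] at h0
      obtain ⟨n, hn⟩ := h0
      have h1 : (n : ℝ) * 2 ^ (s + 2) = j * k := by
        have hpi := Real.pi_ne_zero
        field_simp at hn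
        have h3 : (2 : ℝ) ^ (s + 3) = 2 * 2 ^ (s + 2) := by ring
        rw [h3] at hn
        linarith
      have h4 : n * 2 ^ (s + 2) = ((j * k : ℕ) : ℤ) := by
        push_cast
        exact_mod_cast h1
      have h5 : Odd ((j * k : ℕ) : ℤ) := by exact_mod_cast hodd.mul hk
      rw [← h4, ← Int.not_even_iff_odd] at h5
      exact h5 ⟨n * 2 ^ (s + 1), by ring⟩
    have h6 : (((2 ^ (s + 2) - j : ℕ) : ℝ) * k * π / 2 ^ (s + 3))
        = k * π / 2 - j * k * π / 2 ^ (s + 3) := by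
      rw [Nat.cast_sub hlt.le]
      push_cast
      field_simp
      ring
    rw [h6]
    generalize (j * k * π / 2 ^ (s + 3) : ℝ) = θ at h2
    rw [Real.sin_two_mul] at h2
    have hs : Real.sin θ ≠ 0 := by
      intro h
      simp [h] at h2
    have hc : Real.cos θ ≠ 0 := by
      intro h
      simp [h] at h2
    have hck : Real.cos (k * π / 2) = 0 := by
      rw [Real.cos_eq_zero_iff]
      obtain ⟨m, rfl⟩ := hk
      exact ⟨m, by push_cast; ring⟩
    have hsk : Real.sin (k * π / 2) ≠ 0 := by
      intro h
      have := Real.sin_sq_add_cos_sq (k * π / 2)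
      simp [h, hck] at this
    rw [Real.cot_eq_cos_div_sin, Real.cot_eq_cos_div_sin, Real.cos_sub, Real.sin_sub, hck]
    simp only [zero_mul, zero_add, sub_zero]
    field_simp
  · intro j hj _ h
    rw [Finset.mem_filter, Finset.mem_range] at hj
    obtain ⟨hlt, m, hm⟩ := hj
    omega
  · intro j hj
    rw [Finset.mem_filter, Finset.mem_range] at *
    obtain ⟨hlt, m, hm⟩ := hj
    refine ⟨by omega, ?_⟩
    rw [Nat.odd_iff]
    omega
  · intro j hj
    rw [Finset.mem_filter, Finset.mem_range] at hj
    have := hj.1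
    omega
end

section
/- For every integer r ≥ 2, ∏_{j ∈ I_{2^{r−1}}^*} cos(jπ/2^r) = √2 / 2^{2^{r−2}}, where the product is over the odd integers j with 1 ≤ j ≤ 2^{r−1}. -/
theorem prod_odd_aux (g : ℕ → ℝ) (n : ℕ) :
    ∏ j ∈ (Finset.range (2 * n)).filter (fun j => Odd j), g j
      = ∏ i ∈ Finset.range n, g (2 * i + 1) := by
  rw [Finset.prod_filter]
  induction n with
  | zero => simp
  | succ n ih =>
    rw [show 2 * (n + 1) = 2 * n + 1 + 1 by ring, Finset.prod_range_succ, Finset.prod_range_succ,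
      ih, Finset.prod_range_succ]
    simp

theorem prod_sin_eq_cos (m : ℕ) :
    ∏ i ∈ Finset.range m, Real.sin ((2 * i + 1) * Real.pi / (4 * m))
      = ∏ i ∈ Finset.range m, Real.cos ((2 * i + 1) * Real.pi / (4 * m)) := by
  rw [← Finset.prod_range_reflect]
  refine Finset.prod_congr rfl fun i hi => ?_
  have hi' := Finset.mem_range.1 hi
  have hm : (m : ℝ) ≠ 0 := by
    have : m ≠ 0 := by omega
    exact_mod_cast this
  have hc : ((m - 1 - i : ℕ) : ℝ) = m - 1 - i := by
    rw [Nat.sub_sub, Nat.cast_sub (by omega)]; push_cast; ring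
  rw [← Real.sin_pi_div_two_sub, hc]
  congr 1
  field_simp
  ring

theorem prod_cos_double (m : ℕ) :
    ∏ i ∈ Finset.range (m + m), Real.cos ((2 * i + 1) * Real.pi / (8 * m))
      = (∏ i ∈ Finset.range m, Real.cos ((2 * i + 1) * Real.pi / (4 * m))) / 2 ^ m := by
  rw [Finset.prod_range_add, ← prod_sin_eq_cos,
    ← Finset.prod_range_reflect (fun x => Real.cos ((2 * ((m + x : ℕ) : ℝ) + 1) * Real.pi / (8 * m))),
    ← Finset.prod_mul_distrib, eq_div_iff (by positivity)]
  have h2 : (2 : ℝ) ^ m = ∏ i ∈ Finset.range m, (2 : ℝ) := by simp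
  rw [h2, ← Finset.prod_mul_distrib]
  refine Finset.prod_congr rfl fun i hi => ?_
  have hi' := Finset.mem_range.1 hi
  have hm : (m : ℝ) ≠ 0 := by
    have : m ≠ 0 := by omega
    exact_mod_cast this
  have hc : ((m + (m - 1 - i) : ℕ) : ℝ) = 2 * m - 1 - i := by
    rw [Nat.cast_add, Nat.sub_sub, Nat.cast_sub (by omega)]; push_cast; ring
  rw [hc, show (2 * (2 * (m : ℝ) - 1 - i) + 1) * Real.pi / (8 * m)
      = Real.pi / 2 - (2 * i + 1) * Real.pi / (8 * m) by field_simp; ring,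
    Real.cos_pi_div_two_sub,
    show (2 * (i : ℝ) + 1) * Real.pi / (4 * m) = 2 * ((2 * i + 1) * Real.pi / (8 * m)) by
      field_simp; ring, Real.sin_two_mul]
  ring

theorem prod_cos_pow (k : ℕ) :
    ∏ i ∈ Finset.range (2 ^ k), Real.cos ((2 * i + 1) * Real.pi / (4 * (2 ^ k : ℕ)))
      = Real.sqrt 2 / 2 ^ (2 ^ k) := by
  induction k with
  | zero => simp
  | succ k ih =>
    have h := prod_cos_double (2 ^ k)
    rw [ih] at h
    rw [show 2 ^ (k + 1) = 2 ^ k + 2 ^ k by ring, pow_add (2 : ℝ), ← div_div, ← h]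
    refine Finset.prod_congr rfl fun i _ => ?_
    congr 2
    push_cast
    ring

open Real in
/-- **Product of cosines at odd multiples of `π/2^r` up to `π/2`.**
For every integer `r ≥ 2`, `∏_{j ∈ I_{2^{r−1}}^*} cos(jπ/2^r) = √2 / 2^(2^(r−2))`,
where the product is over the odd integers `j` with `1 ≤ j ≤ 2^(r−1)`. -/
theorem prod_cos_odd_half : ∀ r : ℕ, 2 ≤ r →
    ∏ j ∈ (Finset.range (2 ^ (r - 1))).filter (fun j => Odd j),
        Real.cos (j * π / 2 ^ r) = Real.sqrt 2 / 2 ^ (2 ^ (r - 2)) := by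
  intro r hr
  obtain ⟨k, rfl⟩ := Nat.exists_eq_add_of_le' hr
  rw [show k + 2 - 1 = k + 1 by omega, show k + 2 - 2 = k by omega, pow_succ' 2 k,
    prod_odd_aux (fun j => Real.cos (j * π / 2 ^ (k + 2))), ← prod_cos_pow]
  refine Finset.prod_congr rfl fun i _ => ?_
  congr 1
  push_cast
  ring
end

section
/- Let r ≥ 2 be an integer and ℓ an odd integer, and let N be either 2^r or 2^{r−1}. Then ∑_{k ∈ I_N^*} (−1)^{⌊k/2⌋} cot(kℓπ/2^r) = (−1)^{⌊ℓ/2⌋} · N/2, where the sum is over the odd integers k with 1 ≤ k ≤ N − 1 (equivalently 1 ≤ k ≤ N). -/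
lemma aux_cot_sub_tan (x : ℝ) : Real.cot x - Real.tan x = 2 * Real.cot (2 * x) := by
  rw [Real.cot_eq_cos_div_sin, Real.cot_eq_cos_div_sin, Real.tan_eq_sin_div_cos,
    Real.cos_two_mul', Real.sin_two_mul]
  by_cases h1 : Real.sin x = 0
  · simp [h1]
  by_cases h2 : Real.cos x = 0
  · simp [h2]
  field_simp

lemma aux_cot_pi (m : ℤ) (x : ℝ) : Real.cot (x + m * Real.pi) = Real.cot x := by
  rw [Real.cot_eq_cos_div_sin, Real.cot_eq_cos_div_sin, Real.cos_add_int_mul_pi,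
    Real.sin_add_int_mul_pi]
  rcases Int.even_or_odd m with h | h
  · simp [h.neg_one_zpow]
  · simp [h.neg_one_zpow]

lemma aux_cot_neg (x : ℝ) : Real.cot (-x) = - Real.cot x := by
  simp [Real.cot_eq_cos_div_sin, div_neg]

lemma aux_cot_half (x : ℝ) : Real.cot (Real.pi / 2 - x) = Real.tan x := by
  rw [Real.cot_eq_cos_div_sin, Real.cos_pi_div_two_sub, Real.sin_pi_div_two_sub,
    Real.tan_eq_sin_div_cos]

lemma aux_cot_quarter (m : ℤ) : Real.cot ((2 * m + 1) * Real.pi / 4) = (-1 : ℝ) ^ m := by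
  have h1 : Real.cot (Real.pi / 4) = 1 := by
    rw [Real.cot_eq_cos_div_sin, Real.cos_pi_div_four, Real.sin_pi_div_four]
    exact div_self (by positivity)
  rcases Int.even_or_odd' m with ⟨n, rfl | rfl⟩
  · have : ((2 * ((2 * n : ℤ) : ℝ) + 1) * Real.pi / 4) = Real.pi / 4 + n * Real.pi := by
      push_cast; ring
    rw [this, aux_cot_pi, h1, (even_two_mul n).neg_one_zpow]
  · have : ((2 * ((2 * n + 1 : ℤ) : ℝ) + 1) * Real.pi / 4)
        = -(Real.pi / 4) + (n + 1 : ℤ) * Real.pi := by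
      push_cast; ring
    rw [this, aux_cot_pi, aux_cot_neg, h1, (odd_two_mul_add_one n).neg_one_zpow]

lemma aux_fold (f : ℕ → ℝ) (n : ℕ) :
    ∑ j ∈ Finset.range (2 * n), f j = ∑ j ∈ Finset.range n, (f j + f (2 * n - 1 - j)) := by
  rw [two_mul, Finset.sum_range_add, Finset.sum_add_distrib]
  congr 1
  rw [← Finset.sum_range_reflect]
  refine Finset.sum_congr rfl fun j hj => ?_
  rw [Finset.mem_range] at hj
  congr 1
  omega

lemma aux_sign (n j : ℕ) (hj : j < n) : (-1 : ℝ) ^ (2 * n - 1 - j) = - (-1) ^ j := by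
  rcases Nat.even_or_odd j with h | h
  · have : Odd (2 * n - 1 - j) := by
      obtain ⟨a, rfl⟩ := h
      exact ⟨n - 1 - a, by omega⟩
    rw [h.neg_one_pow, this.neg_one_pow]
  · have : Even (2 * n - 1 - j) := by
      obtain ⟨a, rfl⟩ := h
      exact ⟨n - 1 - a, by omega⟩
    rw [h.neg_one_pow, this.neg_one_pow, neg_neg]

lemma aux_half (m : ℤ) (r : ℕ) :
    ∑ j ∈ Finset.range (2 ^ r),
      (-1 : ℝ) ^ j * Real.cot ((2 * j + 1) * (2 * m + 1) * Real.pi / 2 ^ (r + 2)) =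
      (-1 : ℝ) ^ m * 2 ^ r := by
  induction r with
  | zero =>
    have := aux_cot_quarter m
    norm_num
    exact this
  | succ r ih =>
    rw [pow_succ' 2 r, aux_fold, pow_succ' 2 r, mul_left_comm, ← ih, Finset.mul_sum]
    refine Finset.sum_congr rfl fun j hj => ?_
    rw [Finset.mem_range] at hj
    rw [aux_sign _ _ hj]
    have hc : ((2 * 2 ^ r - 1 - j : ℕ) : ℝ) = 2 * 2 ^ r - 1 - j := by
      rw [Nat.cast_sub (by omega), Nat.cast_sub (by omega)]; push_cast; ring
    set x : ℝ := (2 * j + 1) * (2 * m + 1) * Real.pi / 2 ^ (r + 1 + 2) with hx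
    have e1 : (2 * ((2 * 2 ^ r - 1 - j : ℕ) : ℝ) + 1) * (2 * m + 1) * Real.pi / 2 ^ (r + 1 + 2)
        = (Real.pi / 2 - x) + m * Real.pi := by
      rw [hc, hx]; field_simp; ring
    have e2 : (2 * (j : ℝ) + 1) * (2 * m + 1) * Real.pi / 2 ^ (r + 2) = 2 * x := by
      rw [hx]; field_simp; ring
    rw [e1, e2, aux_cot_pi, aux_cot_half]
    linear_combination (-1 : ℝ) ^ j * aux_cot_sub_tan x

lemma aux_full (m : ℤ) (r : ℕ) :
    ∑ j ∈ Finset.range (2 ^ (r + 1)),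
      (-1 : ℝ) ^ j * Real.cot ((2 * j + 1) * (2 * m + 1) * Real.pi / 2 ^ (r + 2)) =
      (-1 : ℝ) ^ m * 2 ^ (r + 1) := by
  rw [pow_succ' 2 r, aux_fold, pow_succ' 2 r, mul_left_comm, ← aux_half, Finset.mul_sum]
  refine Finset.sum_congr rfl fun j hj => ?_
  rw [Finset.mem_range] at hj
  rw [aux_sign _ _ hj]
  have hc : ((2 * 2 ^ r - 1 - j : ℕ) : ℝ) = 2 * 2 ^ r - 1 - j := by
    rw [Nat.cast_sub (by omega), Nat.cast_sub (by omega)]; push_cast; ring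
  set x : ℝ := (2 * j + 1) * (2 * m + 1) * Real.pi / 2 ^ (r + 2) with hx
  have e1 : (2 * ((2 * 2 ^ r - 1 - j : ℕ) : ℝ) + 1) * (2 * m + 1) * Real.pi / 2 ^ (r + 2)
      = -x + (2 * m + 1 : ℤ) * Real.pi := by
    rw [hc, hx]; push_cast; field_simp; ring
  rw [e1, aux_cot_pi, aux_cot_neg]
  ring

lemma aux_odd_sum (f : ℕ → ℝ) (n : ℕ) :
    ∑ k ∈ (Finset.range (2 * n)).filter (fun k => Odd k), f k
      = ∑ j ∈ Finset.range n, f (2 * j + 1) := by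
  induction n with
  | zero => simp
  | succ n ih =>
    rw [Finset.sum_filter] at ih ⊢
    rw [mul_add, Finset.sum_range_succ _ n, ← ih, mul_one, Finset.sum_range_succ,
      Finset.sum_range_succ]
    simp

open Real in
/-- **Alternating sums of cotangents.**
Let `r ≥ 2` be an integer and `ℓ` an odd integer, and let `N` be either `2^r` or `2^(r−1)`.
Then `∑_{k ∈ I_N^*} (−1)^⌊k/2⌋ cot(kℓπ/2^r) = (−1)^⌊ℓ/2⌋ · N/2`, where the sum is over the
odd integers `k` with `1 ≤ k ≤ N − 1`. -/
theorem alternating_sum_cot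
    (r : ℕ) (hr : 2 ≤ r) (ℓ : ℤ) (hℓ : Odd ℓ) (N : ℕ)
    (hN : N = 2 ^ r ∨ N = 2 ^ (r - 1)) :
    ∑ k ∈ (Finset.range N).filter (fun k => Odd k),
        (-1 : ℝ) ^ (k / 2) * Real.cot ((k : ℝ) * (ℓ : ℝ) * π / 2 ^ r) =
      (-1 : ℝ) ^ (Int.fdiv ℓ 2) * (N : ℝ) / 2 := by
  obtain ⟨m, rfl⟩ := hℓ
  obtain ⟨s, rfl⟩ := Nat.exists_eq_add_of_le' hr
  have hm : Int.fdiv (2 * m + 1) 2 = m := by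
    rw [Int.fdiv_eq_ediv_of_nonneg _ (by norm_num)]; omega
  have hd : ∀ j : ℕ, (2 * j + 1) / 2 = j := fun j => by omega
  rw [hm]
  rcases hN with rfl | rfl
  · rw [show 2 ^ (s + 2) = 2 * 2 ^ (s + 1) by ring, aux_odd_sum]
    have := aux_full m s
    simp only [hd]
    push_cast
    rw [show (2 : ℝ) * 2 ^ (s + 1) = 2 ^ (s + 2) by ring, this]
    ring
  · rw [show 2 ^ (s + 2 - 1) = 2 * 2 ^ s by rw [show s + 2 - 1 = s + 1 by omega]; ring,
      aux_odd_sum]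
    have := aux_half m s
    simp only [hd]
    push_cast
    rw [this]
    ring
end

section
/- Let ν ≥ 0 be an integer. Then for every s ∈ ℂ, ∑_{j ∈ I_{2^{ν+1}}^*} (−1)^{⌊j/2⌋} ( ζ(s, j/2^{ν+2}) − ζ(s, 1 − j/2^{ν+2}) ) = 2^{(ν+2)s} · L(s, χ_4), where the sum is over the odd integers j with 1 ≤ j ≤ 2^{ν+1} − 1 (equivalently 1 ≤ j ≤ 2^{ν+1}), and both sides are the analytic continuations (entire functions of s). -/
/-- The alternating sign is the value of `χ₄`. -/
lemma chi4_aux (j : ℕ) (hj : Odd j) : ((ZMod.χ₄ (j : ZMod 4) : ℤ) : ℂ) = (-1 : ℂ) ^ (j / 2) := by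
  rw [ZMod.χ₄_eq_neg_one_pow (Nat.odd_iff.mp hj)]
  push_cast
  rfl

lemma chi4_even_aux (j : ℕ) (hj : ¬ Odd j) : ZMod.χ₄ (j : ZMod 4) = 0 := by
  rw [ZMod.χ₄_nat_eq_if_mod_four, if_pos (Nat.even_iff.mp (Nat.not_odd_iff_even.mp hj))]

/-- Folding a sum over `range (2 * M)`. -/
lemma sum_fold_aux (M : ℕ) (f : ℕ → ℂ) (h0 : f (2 * M) = 0) (hM : f M = 0) :
    ∑ j ∈ Finset.range (2 * M), f j = ∑ j ∈ Finset.range M, (f j + f (2 * M - j)) := by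
  rw [Finset.sum_add_distrib, two_mul, Finset.sum_range_add]
  congr 1
  rw [← Finset.sum_range_reflect]
  have h1 := Finset.sum_range_succ (fun j => f (2 * M - j)) M
  have h2 := Finset.sum_range_succ' (fun j => f (2 * M - j)) M
  have e : 2 * M - M = M := by omega
  simp only [e, hM, Nat.sub_zero, h0, add_zero] at h1 h2
  rw [← two_mul, ← h1, h2]
  refine Finset.sum_congr rfl fun j hj => ?_
  have := Finset.mem_range.mp hj
  congr 1
  omega

lemma LFunction_level_aux (ν : ℕ) (s : ℂ) :
    (2 : ℂ) ^ (((ν : ℂ) + 2) * s) *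
        DirichletCharacter.LFunction (ZMod.χ₄.ringHomComp (Int.castRingHom ℂ)) s =
    ∑ j ∈ Finset.range (2 ^ (ν + 2)), ((ZMod.χ₄ (j : ZMod 4) : ℤ) : ℂ) *
      HurwitzZeta.hurwitzZeta (((j : ℝ) / 2 ^ (ν + 2) : ℝ) : UnitAddCircle) s := by
  set χ : DirichletCharacter ℂ 4 := ZMod.χ₄.ringHomComp (Int.castRingHom ℂ) with hχ
  have hχa (a : ZMod 4) : χ a = ((ZMod.χ₄ a : ℤ) : ℂ) := rfl
  have hne : χ ≠ 1 := by
    intro h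
    have h3 : χ 3 = 1 := by
      rw [h]
      exact MulChar.one_apply (by decide)
    rw [hχa, show ZMod.χ₄ 3 = -1 by decide] at h3
    norm_num at h3
  have hdvd : 4 ∣ 2 ^ (ν + 2) := ⟨2 ^ ν, by ring⟩
  have hL := DirichletCharacter.LFunction_changeLevel hdvd χ (s := s) (Or.inl hne)
  have hpf : (2 ^ (ν + 2)).primeFactors = {2} :=
    Nat.primeFactors_prime_pow (by omega) Nat.prime_two
  have h2 : χ ((2 : ℕ) : ZMod 4) = 0 := by
    rw [hχa, chi4_even_aux 2 (by decide)]; simp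
  rw [hpf, Finset.prod_singleton, h2, zero_mul, sub_zero, mul_one] at hL
  rw [← hL, DirichletCharacter.LFunction, ZMod.LFunction, ← mul_assoc]
  have hpow : (2 : ℂ) ^ (((ν : ℂ) + 2) * s) * ((2 ^ (ν + 2) : ℕ) : ℂ) ^ (-s) = 1 := by
    have : ((2 ^ (ν + 2) : ℕ) : ℂ) ^ (-s) = (2 : ℂ) ^ (((ν : ℂ) + 2) * (-s)) := by
      have := Complex.natCast_cpow_natCast_mul 2 (ν + 2) (-s)
      push_cast at this ⊢
      exact this.symm
    rw [this, ← Complex.cpow_add _ _ two_ne_zero]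
    simp
  rw [hpow, one_mul]
  symm
  refine Finset.sum_bij' (fun (j : ℕ) _ => (j : ZMod (2 ^ (ν + 2)))) (fun a _ => a.val)
    (fun _ _ => Finset.mem_univ _) (fun a _ => Finset.mem_range.mpr (ZMod.val_lt a))
    (fun j hj => ZMod.val_cast_of_lt (Finset.mem_range.mp hj))
    (fun a _ => ZMod.natCast_zmod_val a) (fun j _ => ?_)
  rw [ZMod.toAddCircle_natCast]
  push_cast
  congr 1
  by_cases h : Odd j
  · have hco : IsCoprime (j : ℤ) ((2 ^ (ν + 2) : ℕ) : ℤ) :=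
      Nat.isCoprime_iff_coprime.mpr (Nat.Coprime.pow_right _ (Nat.coprime_two_right.mpr h))
    have := DirichletCharacter.changeLevel_eq_cast_of_dvd' χ hdvd hco
    rw [Int.cast_natCast, Int.cast_natCast] at this
    rw [this, hχa]
  · rw [chi4_even_aux j h, MulChar.map_nonunit]
    · simp
    · rw [ZMod.isUnit_iff_coprime]
      intro hc
      exact h (Nat.coprime_two_right.mp (Nat.Coprime.coprime_dvd_right (dvd_pow_self 2 (by omega)) hc))

open Real in
/-- **Alternating combination of Hurwitz zeta functions equals a multiple of `L(s, χ₄)`.**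
Let `ν ≥ 0` be an integer.  For every `s ∈ ℂ`,
`∑_{j ∈ I_{2^{ν+1}}^*} (−1)^⌊j/2⌋ (ζ(s, j/2^(ν+2)) − ζ(s, 1 − j/2^(ν+2)))
  = 2^((ν+2)s) · L(s, χ₄)`,
where the sum is over the odd integers `j` with `1 ≤ j ≤ 2^(ν+1) − 1`, `ζ(s,a)` is the
(analytically continued) Hurwitz zeta function, `χ₄` is the primitive Dirichlet character
mod `4`, and `L(·, χ₄)` is its (entire) Dirichlet L-function. -/
theorem sum_hurwitzZeta_eq_LFunction_chi4 (ν : ℕ) (s : ℂ) :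
    ∑ j ∈ (Finset.range (2 ^ (ν + 1))).filter (fun j => Odd j),
        (-1 : ℂ) ^ (j / 2) *
          (HurwitzZeta.hurwitzZeta (((j : ℝ) / 2 ^ (ν + 2) : ℝ) : UnitAddCircle) s -
            HurwitzZeta.hurwitzZeta (((1 - (j : ℝ) / 2 ^ (ν + 2) : ℝ)) : UnitAddCircle) s) =
      (2 : ℂ) ^ (((ν : ℂ) + 2) * s) *
        DirichletCharacter.LFunction (ZMod.χ₄.ringHomComp (Int.castRingHom ℂ)) s := by
  rw [LFunction_level_aux, show Finset.range (2 ^ (ν + 2)) = Finset.range (2 * 2 ^ (ν + 1)) by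
    congr 1; ring, sum_fold_aux, Finset.sum_filter]
  · refine Finset.sum_congr rfl fun j hj => ?_
    have hj' := Finset.mem_range.mp hj
    have hle : j ≤ 2 * 2 ^ (ν + 1) := by omega
    have hc : ((2 * 2 ^ (ν + 1) - j : ℕ) : ZMod 4) = -(j : ZMod 4) := by
      rw [Nat.cast_sub hle]
      have : ((2 * 2 ^ (ν + 1) : ℕ) : ZMod 4) = 0 :=
        (ZMod.natCast_eq_zero_iff _ _).mpr ⟨2 ^ ν, by ring⟩
      rw [this, zero_sub]
    have hneg : ∀ a : ZMod 4, ZMod.χ₄ (-a) = -ZMod.χ₄ a := by decide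
    have hr : ((2 * 2 ^ (ν + 1) - j : ℕ) : ℝ) / 2 ^ (ν + 2) = 1 - (j : ℝ) / 2 ^ (ν + 2) := by
      rw [Nat.cast_sub hle]
      push_cast
      field_simp
      ring
    rw [hc, hneg, hr]
    split_ifs with h
    · rw [← chi4_aux j h]
      push_cast
      ring
    · rw [chi4_even_aux j h]
      simp
  · rw [chi4_even_aux _ (by simp)]; simp
  · rw [chi4_even_aux _ (by simp [Nat.even_pow])]; simp
end

section
/- For every integer r ≥ 1, the matrix J_r satisfies: (i) J_r is orthogonal with determinant 1 (i.e. J_r ∈ SO(2^r, ℤ)); (ii) the characteristic polynomial of J_r is X^{2^r} + 1; (iii) J_r has order exactly 2^{r+1} in GL(2^r, ℤ); and (iv) J_r is conjugate to C_r in GL(2^r, ℚ). -/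
open Matrix

/-- `Cmat r` is the `2^r × 2^r` companion matrix of `X^(2^r) + 1`. -/
def Cmat (r : ℕ) : Matrix (Fin (2 ^ r)) (Fin (2 ^ r)) ℤ :=
  Matrix.of fun i j =>
    if (i : ℕ) = (j : ℕ) + 1 then 1
    else if (i : ℕ) = 0 ∧ (j : ℕ) = 2 ^ r - 1 then -1
    else 0

/-- The matrices `J_r`, defined recursively: `J_0 = (−1)` and
`J_{r+1} = [[0, J_r], [I, 0]]` as a `2^(r+1) × 2^(r+1)` block matrix. -/
def Jmat : (r : ℕ) → Matrix (Fin (2 ^ r)) (Fin (2 ^ r)) ℤ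
  | 0 => Matrix.of fun _ _ => -1
  | (r + 1) =>
      Matrix.reindex
        ((finSumFinEquiv (m := 2 ^ r) (n := 2 ^ r)).trans
          (finCongr (show 2 ^ r + 2 ^ r = 2 ^ (r + 1) by rw [pow_succ]; omega)))
        ((finSumFinEquiv (m := 2 ^ r) (n := 2 ^ r)).trans
          (finCongr (show 2 ^ r + 2 ^ r = 2 ^ (r + 1) by rw [pow_succ]; omega)))
        (Matrix.fromBlocks 0 (Jmat r) 1 0)

theorem Jmat_orth (r : ℕ) : (Jmat r)ᵀ * Jmat r = 1 := by
  induction r with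
  | zero =>
    ext i j
    have h : i = j := Subsingleton.elim (α := Fin 1) i j
    subst h
    simp [Jmat, Matrix.mul_apply]
  | succ r ih =>
    rw [Jmat, Matrix.transpose_reindex, Matrix.reindex_apply, Matrix.reindex_apply,
      Matrix.submatrix_mul_equiv, Matrix.fromBlocks_transpose, Matrix.fromBlocks_multiply]
    simp only [ih, Matrix.transpose_zero, Matrix.transpose_one, mul_zero, zero_mul, mul_one,
      add_zero, zero_add, Matrix.fromBlocks_one]
    exact Matrix.submatrix_one_equiv _

theorem Jmat_sq_pow (r k : ℕ) : (Matrix.fromBlocks 0 (Jmat r) 1 0) ^ (2 * k) =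
    Matrix.fromBlocks ((Jmat r) ^ k) 0 0 ((Jmat r) ^ k) := by
  induction k with
  | zero => simp
  | succ k ih =>
    rw [mul_add, pow_add, ih]
    simp [Matrix.fromBlocks_multiply, pow_succ]

theorem reindex_pow' {m n : Type*} [Fintype m] [Fintype n] [DecidableEq m] [DecidableEq n]
    (e : m ≃ n) (A : Matrix m m ℤ) (k : ℕ) :
    (Matrix.reindex e e A) ^ k = Matrix.reindex e e (A ^ k) := by
  induction k with
  | zero => simp
  | succ k ih =>
    rw [pow_succ, ih, pow_succ]
    simp [Matrix.submatrix_mul_equiv]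

theorem Jmat_pow (r : ℕ) : (Jmat r) ^ (2 ^ r) = -1 := by
  induction r with
  | zero =>
    ext i j
    have h : i = j := Subsingleton.elim (α := Fin 1) i j
    subst h
    simp [Jmat]
  | succ r ih =>
    have hk : (Matrix.fromBlocks 0 (Jmat r) 1 0 :
        Matrix (Fin (2 ^ r) ⊕ Fin (2 ^ r)) (Fin (2 ^ r) ⊕ Fin (2 ^ r)) ℤ) ^ (2 ^ (r + 1)) =
        Matrix.fromBlocks ((Jmat r) ^ (2 ^ r)) 0 0 ((Jmat r) ^ (2 ^ r)) := by
      rw [pow_succ' 2 r, Jmat_sq_pow]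
    rw [Jmat, reindex_pow', hk, ih]
    have : Matrix.fromBlocks (-1 : Matrix (Fin (2 ^ r)) (Fin (2 ^ r)) ℤ) 0 0
        (-1 : Matrix (Fin (2 ^ r)) (Fin (2 ^ r)) ℤ) = -1 := by
      rw [← Matrix.fromBlocks_one, Matrix.fromBlocks_neg]; simp
    rw [this, Matrix.reindex_apply, Matrix.submatrix_neg, Pi.neg_apply, Pi.neg_apply]
    exact congrArg _ (Matrix.submatrix_one_equiv _)

open Polynomial in
theorem irr_X_pow (r : ℕ) : Irreducible (X ^ (2 ^ r) + 1 : ℚ[X]) := by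
  have h := Polynomial.cyclotomic.irreducible_rat (n := 2 ^ (r + 1)) (by positivity)
  rw [Polynomial.cyclotomic_prime_pow_eq_geom_sum Nat.prime_two] at h
  simpa [Finset.sum_range_succ, add_comm] using h

theorem JmatQ_pow (r : ℕ) : ((Jmat r).map (Int.cast : ℤ → ℚ)) ^ (2 ^ r) = -1 := by
  have h := congrArg (fun A => (Int.castRingHom ℚ).mapMatrix A) (Jmat_pow r)
  simp only [map_pow, map_neg, map_one] at h
  exact h

open Polynomial in
theorem Jmat_charpoly (r : ℕ) : Matrix.charpoly (Jmat r) = X ^ (2 ^ r) + 1 := by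
  apply Polynomial.map_injective (Int.castRingHom ℚ) Int.cast_injective
  rw [← Matrix.charpoly_map]
  have hm : (X ^ (2 ^ r) + 1 : ℚ[X]).Monic := monic_X_pow_add_C 1 (by positivity)
  have h1 : X ^ (2 ^ r) + 1 = minpoly ℚ ((Jmat r).map (Int.castRingHom ℚ)) := by
    apply minpoly.eq_of_irreducible_of_monic (irr_X_pow r) _ hm
    have := JmatQ_pow r
    simp only [map_add, map_pow, aeval_X, map_one]
    erw [this]
    simp
  have h2 := Matrix.minpoly_dvd_charpoly ((Jmat r).map (Int.castRingHom ℚ))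
  rw [← h1] at h2
  simp only [Polynomial.map_add, Polynomial.map_pow, map_X, Polynomial.map_one]
  refine (Polynomial.eq_of_monic_of_dvd_of_natDegree_le hm (Matrix.charpoly_monic _) h2 ?_)
  rw [Matrix.charpoly_natDegree_eq_dim]
  have : (X ^ (2 ^ r) + 1 : ℚ[X]).natDegree = 2 ^ r := natDegree_X_pow_add_C (r := 1)
  simp [this]

open Polynomial in
theorem Jmat_conj (r : ℕ) :
    ∃ P : Matrix (Fin (2 ^ r)) (Fin (2 ^ r)) ℚ, IsUnit P.det ∧
      P * (Cmat r).map (Int.cast : ℤ → ℚ) = (Jmat r).map (Int.cast : ℤ → ℚ) * P := by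
  have hpos : 0 < 2 ^ r := by positivity
  have hJ := JmatQ_pow r
  set J := (Jmat r).map (Int.cast : ℤ → ℚ) with hJdef
  let z : Fin (2 ^ r) := ⟨0, hpos⟩
  refine ⟨Matrix.of fun i k => (J ^ (k : ℕ)) i z, ?_, ?_⟩
  · rw [isUnit_iff_ne_zero]
    intro hdet
    obtain ⟨a, ha, h0⟩ := Matrix.exists_mulVec_eq_zero_iff.mpr hdet
    apply ha
    set p : ℚ[X] := ∑ k : Fin (2 ^ r), C (a k) * X ^ (k : ℕ) with hp
    have hdeg : p.degree < ((2 ^ r : ℕ) : WithBot ℕ) := degree_sum_fin_lt a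
    have hcoeff : ∀ k : Fin (2 ^ r), p.coeff k = a k := by
      intro k
      simp [hp, coeff_X_pow, Fin.val_inj]
    have hp0 : p = 0 := by
      by_contra hne
      have hq : (X ^ (2 ^ r) + 1 : ℚ[X]).degree = ((2 ^ r : ℕ) : WithBot ℕ) :=
        degree_X_pow_add_C hpos 1
      have hnd : ¬ (X ^ (2 ^ r) + 1 : ℚ[X]) ∣ p := fun hd => by
        have := degree_le_of_dvd hd hne
        rw [hq] at this
        exact absurd hdeg (not_lt.mpr this)
      obtain ⟨u, v, huv⟩ := ((irr_X_pow r).coprime_iff_not_dvd.mpr hnd)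
      have h1 := congrArg (aeval J) huv
      simp only [map_add, map_mul, map_pow, aeval_X, map_one, hJ] at h1
      rw [neg_add_cancel, mul_zero, zero_add] at h1
      have h2 : ∀ i, (aeval J p) i z = 0 := by
        intro i
        have := congrFun h0 i
        simp only [Matrix.mulVec, dotProduct, Matrix.of_apply, Pi.zero_apply] at this
        rw [← this, hp, map_sum, Matrix.sum_apply]
        refine Finset.sum_congr rfl fun k _ => ?_
        rw [map_mul, aeval_C, map_pow, aeval_X, ← Algebra.smul_def, Matrix.smul_apply, smul_eq_mul,
          mul_comm]
      have h3 := congrFun (congrFun h1 z) z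
      rw [Matrix.mul_apply] at h3
      simp [h2] at h3
    funext k
    rw [← hcoeff k, hp0]; simp
  · ext i j
    have hR : (J * Matrix.of fun i (k : Fin (2 ^ r)) => (J ^ (k : ℕ)) i z) i j
        = (J ^ ((j : ℕ) + 1)) i z := by
      rw [pow_succ', Matrix.mul_apply, Matrix.mul_apply]; rfl
    rw [hR, Matrix.mul_apply]
    by_cases hj : (j : ℕ) + 1 < 2 ^ r
    · rw [Finset.sum_eq_single (⟨j + 1, hj⟩ : Fin (2 ^ r))]
      · simp [Cmat]
      · intro l _ hl
        have h1 : ¬ ((l : ℕ) = j + 1) := fun h => hl (Fin.ext h)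
        have h2 : ¬ ((j : ℕ) = 2 ^ r - 1) := by omega
        simp [Cmat, h1, h2]
      · simp
    · have hj' : (j : ℕ) + 1 = 2 ^ r := by omega
      rw [Finset.sum_eq_single z]
      · have h2 : (j : ℕ) = 2 ^ r - 1 := by omega
        rw [hj', hJ]
        simp [Cmat, z, h2]
      · intro l _ hl
        have h1 : ¬ ((l : ℕ) = j + 1) := by omega
        have h2 : ¬ ((l : ℕ) = 0) := fun h => hl (Fin.ext h)
        simp only [Cmat, Matrix.map_apply, Matrix.of_apply, h1, h2, false_and, if_false]
        simp
      · simp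

theorem Jmat_props (r : ℕ) (hr : 1 ≤ r) :
    (Jmat r)ᵀ * Jmat r = 1 ∧ (Jmat r).det = 1 ∧
    Matrix.charpoly (Jmat r) = Polynomial.X ^ (2 ^ r) + 1 ∧
    orderOf (Jmat r) = 2 ^ (r + 1) ∧
    ∃ P : Matrix (Fin (2 ^ r)) (Fin (2 ^ r)) ℚ, IsUnit P.det ∧
      P * (Cmat r).map (Int.cast : ℤ → ℚ) = (Jmat r).map (Int.cast : ℤ → ℚ) * P := by
  refine ⟨Jmat_orth r, ?_, Jmat_charpoly r, ?_, Jmat_conj r⟩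
  · rw [Matrix.det_eq_sign_charpoly_coeff, Jmat_charpoly]
    have : Even (2 ^ r) := (Nat.even_pow.mpr ⟨even_two, by omega⟩)
    have h0 : ¬ 0 = 2 ^ r := (by positivity : 0 < 2 ^ r).ne
    simp [this.neg_one_pow, Polynomial.coeff_X_pow, h0]
  · apply orderOf_eq_prime_pow
    · rw [Jmat_pow]
      intro h
      have hpos : 0 < 2 ^ r := by positivity
      have := congrFun (congrFun h ⟨0, hpos⟩) ⟨0, hpos⟩
      simp at this
    · rw [pow_succ, pow_mul, Jmat_pow]; simp
end

section
/- For every integer r ≥ 1, the cokernel of the group homomorphism ℤ^{2^r} → ℤ^{2^r} given by v ↦ (J_r − I)v is cyclic of order 2; that is, ℤ^{2^r} / (J_r − I)ℤ^{2^r} ≅ ℤ/2ℤ. In particular, 2v ∈ (J_r − I)ℤ^{2^r} for every v ∈ ℤ^{2^r}, and all standard basis vectors e_1, …, e_{2^r} are congruent to each other modulo (J_r − I)ℤ^{2^r}. -/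
open Matrix

theorem Jmat_range_iff (r : ℕ) : ∀ v : Fin (2 ^ r) → ℤ,
    (∃ w, (Jmat r - 1).mulVec w = v) ↔ (2 : ℤ) ∣ ∑ i, v i := by
  induction r with
  | zero =>
    intro v
    have key : ∀ w : Fin (2 ^ 0) → ℤ, (Jmat 0 - 1).mulVec w = (-2 : ℤ) • w := by
      intro w
      have h1 : (Jmat 0).mulVec w = - w := by
        funext i
        have : ∀ j : Fin (2 ^ 0), j = i := fun j => by
          apply Fin.ext
          have := j.2
          have := i.2
          omega
        rw [Matrix.mulVec, dotProduct, Finset.sum_eq_single i]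
        · simp [Jmat]
        · intro j _ hj
          exact absurd (this j) hj
        · intro hi
          exact absurd (Finset.mem_univ i) hi
      rw [Matrix.sub_mulVec, h1, Matrix.one_mulVec]
      funext i
      simp
      ring
    have hs : ∑ i, v i = v ⟨0, by norm_num⟩ := by
      rw [Finset.sum_eq_single ⟨0, by norm_num⟩]
      · intro j _ hj
        refine absurd (Fin.ext ?_) hj
        have := j.2
        simp only
        omega
      · simp
    rw [hs]
    constructor
    · rintro ⟨w, rfl⟩
      rw [key]
      exact ⟨- w ⟨0, by norm_num⟩, by simp⟩
    · rintro ⟨k, hk⟩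
      refine ⟨fun _ => -k, ?_⟩
      rw [key]
      funext i
      have : i = ⟨0, by norm_num⟩ := by
        apply Fin.ext
        have := i.2
        simp only
        omega
      rw [this, hk]
      simp
  | succ r ih =>
    intro v
    obtain ⟨e, he⟩ : ∃ e : Fin (2 ^ r) ⊕ Fin (2 ^ r) ≃ Fin (2 ^ (r + 1)),
        Jmat (r + 1) = Matrix.reindex e e (Matrix.fromBlocks 0 (Jmat r) 1 0) := ⟨_, rfl⟩
    have hmul : ∀ w : Fin (2 ^ (r + 1)) → ℤ, (Jmat (r + 1)).mulVec w =
        (Sum.elim ((Jmat r).mulVec (w ∘ e ∘ Sum.inr)) (w ∘ e ∘ Sum.inl)) ∘ e.symm := by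
      intro w
      rw [he, Matrix.reindex_apply, Matrix.submatrix_mulVec_equiv, Matrix.fromBlocks_mulVec]
      simp [Function.comp_assoc]
    have hsum : ∑ i, v i = ∑ i, (v ∘ e ∘ Sum.inl + v ∘ e ∘ Sum.inr) i := by
      rw [← e.sum_comp, Fintype.sum_sum_type, ← Finset.sum_add_distrib]
      rfl
    rw [hsum, ← ih]
    constructor
    · rintro ⟨w, rfl⟩
      refine ⟨w ∘ e ∘ Sum.inr, ?_⟩
      rw [Matrix.sub_mulVec, Matrix.sub_mulVec, hmul, Matrix.one_mulVec, Matrix.one_mulVec]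
      funext i
      simp
    · rintro ⟨y, hy⟩
      refine ⟨(Sum.elim (v ∘ e ∘ Sum.inr + y) y) ∘ e.symm, ?_⟩
      rw [Matrix.sub_mulVec, hmul, Matrix.one_mulVec]
      rw [Matrix.sub_mulVec, Matrix.one_mulVec] at hy
      funext i
      obtain ⟨j, rfl⟩ := e.surjective i
      rcases j with j | j
      · have := congrFun hy j
        have hc : (Sum.elim (v ∘ e ∘ Sum.inr + y) y ∘ e.symm) ∘ e ∘ Sum.inr = y := by
          funext k
          simp
        rw [hc]
        simp at this ⊢
        linarith
      · simp

/-- **The cokernel of `J_r − I` on `ℤ^(2^r)` is `ℤ/2ℤ`.**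
For every `r ≥ 1`, `ℤ^(2^r) / (J_r − I)ℤ^(2^r) ≅ ℤ/2ℤ`.  In particular `2v` lies in
`(J_r − I)ℤ^(2^r)` for every `v`, and all standard basis vectors are congruent to each other
modulo `(J_r − I)ℤ^(2^r)`. -/
theorem cokernel_Jmat_sub_one (r : ℕ) (hr : 1 ≤ r) :
    Nonempty (((Fin (2 ^ r) → ℤ) ⧸
        LinearMap.range (Matrix.mulVecLin (Jmat r - 1))) ≃+ ZMod 2) ∧
    (∀ v : Fin (2 ^ r) → ℤ, ∃ w, (Jmat r - 1).mulVec w = (2 : ℤ) • v) ∧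
    (∀ i j : Fin (2 ^ r), ∃ w,
      (Jmat r - 1).mulVec w = Pi.single i (1 : ℤ) - Pi.single j (1 : ℤ)) := by
  have H := Jmat_range_iff r
  refine ⟨?_, ?_, ?_⟩
  · let f : (Fin (2 ^ r) → ℤ) →ₗ[ℤ] ZMod 2 :=
      (Int.castAddHom (ZMod 2)).toIntLinearMap ∘ₗ ∑ i, LinearMap.proj i
    have hf : ∀ v, f v = ((∑ i, v i : ℤ) : ZMod 2) := by
      intro v
      simp [f]
    have hsurj : Function.Surjective f := by
      intro z
      obtain ⟨k, rfl⟩ := ZMod.intCast_surjective z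
      refine ⟨Pi.single ⟨0, by positivity⟩ k, ?_⟩
      rw [hf]
      simp
    have hker : LinearMap.range (Matrix.mulVecLin (Jmat r - 1)) = LinearMap.ker f := by
      ext v
      rw [LinearMap.mem_ker, hf, ZMod.intCast_zmod_eq_zero_iff_dvd, LinearMap.mem_range]
      exact H v
    exact ⟨((Submodule.quotEquivOfEq _ _ hker).trans
      (f.quotKerEquivOfSurjective hsurj)).toAddEquiv⟩
  · intro v
    rw [H]
    exact ⟨∑ i, v i, by simp [Finset.mul_sum]⟩
  · intro i j
    rw [H]
    simp
end

section
/- Let n ≥ 1, let B ∈ GL(n, ℝ), let Λ be an additive subgroup of ℝ^n with BΛ = Λ, and let b ∈ ℝ^n. Let Γ be the subgroup of the group of affine bijections of ℝ^n generated by the map γ : x ↦ Bx + b together with all translations L_λ : x ↦ x + λ with λ ∈ Λ. Then the commutator subgroup of Γ is exactly the set of translations by vectors in (B − I)Λ: [Γ, Γ] = { L_v : v ∈ (B − I)Λ }, where (B − I)Λ = { Bλ − λ : λ ∈ Λ }. -/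
open scoped commutatorElement in
theorem comm_aux {G V : Type*} [Group G] [AddCommGroup V] (B : V ≃+ V) (Λ : AddSubgroup V)
    (hΛ : ∀ v, B v ∈ Λ ↔ v ∈ Λ) (t : V → G) (t0 : t 0 = 1)
    (tadd : ∀ u v, t (u + v) = t u * t v) (γ : G) (hγ : ∀ v, γ * t v * γ⁻¹ = t (B v)) :
    ((⁅Subgroup.closure ({γ} ∪ t '' (Λ : Set V)), Subgroup.closure ({γ} ∪ t '' (Λ : Set V))⁆ :
      Subgroup G) : Set G) = t '' ((fun v => B v - v) '' (Λ : Set V)) := by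
  have tneg : ∀ v, t (-v) = (t v)⁻¹ := fun v => by
    rw [eq_inv_iff_mul_eq_one, ← tadd, neg_add_cancel, t0]
  have tcomm : ∀ u v, t u * t v = t v * t u := fun u v => by
    rw [← tadd, ← tadd, add_comm]
  let D : Subgroup G :=
    { carrier := t '' ((fun v => B v - v) '' (Λ : Set V))
      one_mem' := ⟨0, ⟨0, Λ.zero_mem, by simp⟩, t0⟩
      mul_mem' := by
        rintro _ _ ⟨_, ⟨u, hu, rfl⟩, rfl⟩ ⟨_, ⟨v, hv, rfl⟩, rfl⟩
        refine ⟨_, ⟨u + v, Λ.add_mem hu hv, rfl⟩, ?_⟩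
        rw [← tadd]
        congr 1
        simp only [map_add]
        abel
      inv_mem' := by
        rintro _ ⟨_, ⟨u, hu, rfl⟩, rfl⟩
        refine ⟨_, ⟨-u, Λ.neg_mem hu, rfl⟩, ?_⟩
        rw [← tneg]
        congr 1
        simp only [map_neg]
        abel }
  have hD : ∀ v ∈ Λ, t (B v - v) ∈ D := fun v hv => ⟨_, ⟨v, hv, rfl⟩, rfl⟩
  have hc : ∀ v, ⁅γ, t v⁆ = t (B v - v) := fun v => by
    rw [commutatorElement_def, hγ, sub_eq_add_neg, tadd, tneg]
  have hN : Subgroup.closure ({γ} ∪ t '' (Λ : Set V)) ≤ Subgroup.normalizer (D : Set G) := by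
    rw [Subgroup.closure_le]
    rintro g (hg | ⟨l, hl, rfl⟩)
    · obtain rfl : g = γ := hg
      refine Subgroup.mem_normalizer_iff.2 fun h => ⟨?_, ?_⟩
      · rintro ⟨_, ⟨u, hu, rfl⟩, rfl⟩
        rw [hγ]
        simp only [map_sub]
        exact hD _ ((hΛ u).2 hu)
      · rintro ⟨_, ⟨u, hu, rfl⟩, h2⟩
        obtain ⟨m, rfl⟩ := B.surjective u
        have h3 : t (B (B m) - B m) = g * t (B m - m) * g⁻¹ := by rw [hγ, map_sub]
        have h4 : g * t (B m - m) * g⁻¹ = g * h * g⁻¹ := h3.symm.trans h2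
        have h5 : t (B m - m) = h := by simpa using h4
        rw [← h5]
        exact hD _ ((hΛ m).1 hu)
    · refine Subgroup.mem_normalizer_iff.2 fun h => ⟨?_, ?_⟩
      · rintro ⟨_, ⟨u, hu, rfl⟩, rfl⟩
        rw [tcomm, mul_inv_cancel_right]
        exact hD _ hu
      · rintro ⟨_, ⟨u, hu, rfl⟩, h2⟩
        have h5 : t (B u - u) = h := by
          have : h = (t l)⁻¹ * (t l * h * (t l)⁻¹) * t l := by group
          rw [this, ← h2, mul_assoc]
          simp only
          rw [tcomm, inv_mul_cancel_left]
        rw [← h5]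
        exact hD _ hu
  have conj : ∀ x ∈ Subgroup.closure ({γ} ∪ t '' (Λ : Set V)), ∀ d ∈ D, x * d * x⁻¹ ∈ D :=
    fun x hx d hd => (Subgroup.mem_normalizer_iff.1 (hN hx) d).1 hd
  have key : ⁅Subgroup.closure ({γ} ∪ t '' (Λ : Set V)),
      Subgroup.closure ({γ} ∪ t '' (Λ : Set V))⁆ = D := by
    apply le_antisymm
    · have step : ∀ z, (∀ x ∈ ({γ} ∪ t '' (Λ : Set V)), ⁅x, z⁆ ∈ D) →
          ∀ x ∈ Subgroup.closure ({γ} ∪ t '' (Λ : Set V)), ⁅x, z⁆ ∈ D := by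
        intro z hz x hx
        induction hx using Subgroup.closure_induction with
        | mem x hx => exact hz x hx
        | one => simp
        | mul x y hx hy h1 h2 =>
          have : ⁅x * y, z⁆ = (x * ⁅y, z⁆ * x⁻¹) * ⁅x, z⁆ := by
            simp only [commutatorElement_def]; group
          rw [this]
          exact D.mul_mem (conj x hx _ h2) h1
        | inv x hx h1 =>
          have : ⁅x⁻¹, z⁆ = x⁻¹ * ⁅x, z⁆⁻¹ * x⁻¹⁻¹ := by
            simp only [commutatorElement_def]; group
          rw [this]
          exact conj _ (Subgroup.inv_mem _ hx) _ (D.inv_mem h1)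
      have gens : ∀ x ∈ ({γ} ∪ t '' (Λ : Set V)), ∀ y ∈ ({γ} ∪ t '' (Λ : Set V)), ⁅x, y⁆ ∈ D := by
        rintro x (rfl | ⟨l, hl, rfl⟩) y (rfl | ⟨m, hm, rfl⟩)
        · simp
        · rw [hc]; exact hD _ hm
        · rw [← commutatorElement_inv, hc]; exact D.inv_mem (hD _ hl)
        · rw [commutatorElement_eq_one_iff_mul_comm.2 (tcomm l m)]; exact D.one_mem
      rw [Subgroup.commutator_le]
      intro x hx y hy
      refine step y (fun g hg => ?_) x hx
      rw [← commutatorElement_inv]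
      exact D.inv_mem (step g (fun k hk => gens k hk g hg) y hy)
    · rintro _ ⟨_, ⟨u, hu, rfl⟩, rfl⟩
      have := Subgroup.commutator_mem_commutator
        (Subgroup.subset_closure (Or.inl rfl) : γ ∈ Subgroup.closure ({γ} ∪ t '' (Λ : Set V)))
        (Subgroup.subset_closure (Or.inr ⟨u, hu, rfl⟩) :
          t u ∈ Subgroup.closure ({γ} ∪ t '' (Λ : Set V)))
      rwa [hc] at this
  rw [key]
  rfl

/-- **The commutator subgroup of a crystallographic-type group `Γ = ⟨γ, L_Λ⟩`.**
Let `n ≥ 1`, let `B ∈ GL(n, ℝ)` (as a linear automorphism of `ℝ^n`), let `Λ` be an additive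
subgroup of `ℝ^n` with `BΛ = Λ`, and let `b ∈ ℝ^n`.  Let `Γ` be the subgroup of the group of
affine bijections of `ℝ^n` generated by `γ : x ↦ Bx + b` together with all translations
`L_λ : x ↦ x + λ`, `λ ∈ Λ`.  Then `[Γ, Γ] = { L_v : v ∈ (B − I)Λ }` where
`(B − I)Λ = { Bλ − λ : λ ∈ Λ }`. -/
theorem commutator_subgroup_eq_translations
    (n : ℕ) (hn : 1 ≤ n)
    (B : (Fin n → ℝ) ≃ₗ[ℝ] (Fin n → ℝ))
    (Λ : AddSubgroup (Fin n → ℝ)) (hΛ : ∀ v : Fin n → ℝ, B v ∈ Λ ↔ v ∈ Λ)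
    (b : Fin n → ℝ) :
    let γ : (Fin n → ℝ) ≃ᵃ[ℝ] (Fin n → ℝ) :=
      B.toAffineEquiv.trans (AffineEquiv.constVAdd ℝ (Fin n → ℝ) b)
    let Γ : Subgroup ((Fin n → ℝ) ≃ᵃ[ℝ] (Fin n → ℝ)) :=
      Subgroup.closure ({γ} ∪
        (fun v => AffineEquiv.constVAdd ℝ (Fin n → ℝ) v) '' (Λ : Set (Fin n → ℝ)))
    ((⁅Γ, Γ⁆ : Subgroup ((Fin n → ℝ) ≃ᵃ[ℝ] (Fin n → ℝ))) :
        Set ((Fin n → ℝ) ≃ᵃ[ℝ] (Fin n → ℝ))) =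
      (fun v => AffineEquiv.constVAdd ℝ (Fin n → ℝ) v) ''
        ((fun v => B v - v) '' (Λ : Set (Fin n → ℝ))) := by
  intro γ Γ
  refine comm_aux B.toAddEquiv Λ hΛ (fun v => AffineEquiv.constVAdd ℝ (Fin n → ℝ) v) ?_ ?_ γ ?_
  · exact AffineEquiv.constVAdd_zero ℝ _
  · intro u v
    ext x : 1
    simp [AffineEquiv.mul_def, add_assoc]
  · intro v
    rw [mul_inv_eq_iff_eq_mul]
    ext x : 1
    simp [γ, AffineEquiv.mul_def, add_left_comm]
end

section
/- Let r ≥ 2 and let k_i, k_i' ≥ 0 for 2 ≤ i ≤ r − 1 and j_1 ≥ 1 odd, with j_i := k_i + k_i' for 2 ≤ i ≤ r − 1 and j_{r−1} ≥ 1. Let n = 2^{r−1} j_{r−1} + ⋯ + 4 j_2 + 2 j_1 + 1, and let B ∈ GL(n, ℤ) be the block-diagonal matrix B = diag(C_{r−1}, …, C_{r−1} (k_{r−1} copies), J_{r−1}, …, J_{r−1} (k_{r−1}' copies), …, C_2, …, C_2 (k_2 copies), J_2, …, J_2 (k_2' copies), J_1, …, J_1 (j_1 copies), 1). Let Γ be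 the subgroup of the group of affine bijections of ℝ^n generated by γ : x ↦ Bx + (1/2^r) e_n together with all translations by vectors in ℤ^n. Then the abelianization of Γ is isomorphic to ℤ × (ℤ/2ℤ)^{j_{r−1} + ⋯ + j_2 + j_1}. -/
open Matrix

/-- Index type for the diagonal blocks of the matrix
`B = diag(C_{r−1} (k_{r−1} copies), J_{r−1} (k'_{r−1} copies), …,
C_2 (k_2 copies), J_2 (k'_2 copies), J_1 (j₁ copies), 1)`:
for each `i` with `2 ≤ i ≤ r − 1` (encoded as `i₀ + 2` with `i₀ : Fin (r − 2)`) there are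
`k i` blocks `C_i` and `k' i` blocks `J_i`; then `j₁` blocks `J_1`; then one `1 × 1` block. -/
abbrev BlockIx (r : ℕ) (k k' : ℕ → ℕ) (j₁ : ℕ) : Type :=
  (Σ i : Fin (r - 2), (Fin (k (i.val + 2)) ⊕ Fin (k' (i.val + 2)))) ⊕ (Fin j₁ ⊕ Unit)

/-- The size of each diagonal block. -/
def blockSize (r : ℕ) (k k' : ℕ → ℕ) (j₁ : ℕ) : BlockIx r k k' j₁ → ℕ
  | Sum.inl ⟨i, _⟩ => 2 ^ (i.val + 2)
  | Sum.inr (Sum.inl _) => 2 ^ 1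
  | Sum.inr (Sum.inr _) => 2 ^ 0

/-- The diagonal blocks themselves. -/
def blockMat (r : ℕ) (k k' : ℕ → ℕ) (j₁ : ℕ) :
    (x : BlockIx r k k' j₁) →
      Matrix (Fin (blockSize r k k' j₁ x)) (Fin (blockSize r k k' j₁ x)) ℤ
  | Sum.inl ⟨i, Sum.inl _⟩ => Cmat (i.val + 2)
  | Sum.inl ⟨i, Sum.inr _⟩ => Jmat (i.val + 2)
  | Sum.inr (Sum.inl _) => Jmat 1
  | Sum.inr (Sum.inr _) => 1

section Core

variable {n : ℕ}

/-- scaled embedding of the integer lattice -/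
noncomputable def iotaMap (r : ℕ) (l : Fin n) (w : Fin n → ℤ) : Fin n → ℝ :=
  fun i => (w i : ℝ) + (Pi.single l ((((2 : ℝ) ^ r)⁻¹ - 1) * (w l : ℝ)) : Fin n → ℝ) i

lemma iotaMap_injective (r : ℕ) (l : Fin n) : Function.Injective (iotaMap r l) := by
  intro w w' h
  have hl : w l = w' l := by
    have := congrFun h l
    simp only [iotaMap, Pi.single_eq_same] at this
    have h2 : ((2:ℝ)^r)⁻¹ * (w l : ℝ) = ((2:ℝ)^r)⁻¹ * (w' l : ℝ) := by linarith
    have h3 : ((2:ℝ)^r)⁻¹ ≠ 0 := by positivity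
    exact_mod_cast mul_left_cancel₀ h3 h2
  funext i
  have := congrFun h i
  simp only [iotaMap, hl] at this
  exact_mod_cast add_right_cancel this

lemma core_abelianization {β : Type} [Fintype β] [DecidableEq β] (r : ℕ) (l : Fin n)
    (B : Matrix (Fin n) (Fin n) ℤ) (Binv : Matrix (Fin n) (Fin n) ℤ)
    (hBB : B * Binv = 1) (hBB' : Binv * B = 1)
    (hpow : B ^ (2 ^ r) = 1)
    (hcol : B *ᵥ Pi.single l 1 = Pi.single l 1)
    (hrow : ∀ w, (B *ᵥ w) l = w l)
    (ψ : (Fin n → ℤ) →+ (β → ZMod 2))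
    (hψB : ∀ w, ψ (B *ᵥ w) = ψ w)
    (hψl : ψ (Pi.single l 1) = 0)
    (rep : β → Fin n)
    (hrep : ∀ b, ψ (Pi.single (rep b) 1) = Pi.single b 1)
    (hrepl : ∀ b, rep b ≠ l)
    (hf : ∀ (A : Type) [AddCommGroup A] (f : (Fin n → ℤ) →+ A), (∀ w, f (B *ᵥ w) = f w) →
      (∀ b, f (Pi.single (rep b) 1) + f (Pi.single (rep b) 1) = 0) ∧
      ∀ i, i ≠ l → ∃ b, ψ (Pi.single i 1) = Pi.single b 1 ∧
        f (Pi.single i 1) = f (Pi.single (rep b) 1))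
    (γ : (Fin n → ℝ) ≃ᵃ[ℝ] (Fin n → ℝ))
    (hγ : ∀ x, γ x = B.map (Int.castRingHom ℝ) *ᵥ x + Pi.single l (((2 : ℝ) ^ r)⁻¹))
    (Γ : Subgroup ((Fin n → ℝ) ≃ᵃ[ℝ] (Fin n → ℝ)))
    (hΓ : Γ = Subgroup.closure ({γ} ∪
        Set.range (fun v : Fin n → ℤ =>
          AffineEquiv.constVAdd ℝ (Fin n → ℝ) (fun i => (v i : ℝ))))) :
    Nonempty (Abelianization Γ ≃* Multiplicative (ℤ × (β → ZMod 2))) := by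
  classical
  -- translations
  let T : (Fin n → ℤ) → ((Fin n → ℝ) ≃ᵃ[ℝ] (Fin n → ℝ)) := fun v =>
    AffineEquiv.constVAdd ℝ (Fin n → ℝ) (fun i => (v i : ℝ))
  have hTapp : ∀ v x, T v x = (fun i => (v i : ℝ)) + x := fun v x => rfl
  have hcastmul : ∀ w : Fin n → ℤ, (B.map (Int.castRingHom ℝ)) *ᵥ (fun i => (w i : ℝ)) =
      fun i => (((B *ᵥ w) i : ℤ) : ℝ) := by
    intro w; funext i; simp [Matrix.mulVec, dotProduct]
  have hcolR : ∀ c : ℝ, (B.map (Int.castRingHom ℝ)) *ᵥ (Pi.single l c) = Pi.single l c := by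
    intro c
    have h1 : (Pi.single l c : Fin n → ℝ) =
        c • (fun i => (((Pi.single l 1 : Fin n → ℤ) i : ℤ) : ℝ)) := by
      funext i; by_cases h : i = l
      · subst h; simp
      · simp [h]
    rw [h1, Matrix.mulVec_smul, hcastmul, hcol]
  -- full invariant
  let Ψ : (Fin n → ℤ) →+ ℤ × (β → ZMod 2) := (Pi.evalAddMonoidHom (fun _ : Fin n => ℤ) l).prod ψ
  have hψsl : ∀ c : ℤ, ψ (Pi.single l c) = 0 := by
    intro c
    have : (Pi.single l c : Fin n → ℤ) = c • Pi.single l 1 := by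
      rw [← Pi.single_smul]; simp
    rw [this, map_zsmul, hψl, smul_zero]
  have hΨ1 : Ψ (Pi.single l 1) = (1, 0) := by
    ext <;> simp [Ψ, hψl]
  let sc : (Fin n → ℤ) → (Fin n → ℤ) := fun v => v + Pi.single l ((2 ^ r - 1) * v l)
  have hΨsc : ∀ v, Ψ (sc v) = (2 ^ r * v l, ψ v) := by
    intro v
    apply Prod.ext
    · simp [Ψ, sc]; ring
    · simp [Ψ, sc, hψsl]
  have hΨB : ∀ w, Ψ (B *ᵥ w) = Ψ w := by
    intro w
    exact Prod.ext (hrow w) (hψB w)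
  -- key relation
  let Q : ((Fin n → ℝ) ≃ᵃ[ℝ] (Fin n → ℝ)) → ℤ × (β → ZMod 2) → Prop := fun g t =>
    ∃ p : Equiv.Perm (Fin n → ℤ), (∀ w, g (iotaMap r l w) = iotaMap r l (p w)) ∧
      ∀ w, Ψ (p w) = Ψ w + t
  have Qγ : Q γ (1, 0) := by
    let pB : Equiv.Perm (Fin n → ℤ) :=
      { toFun := fun w => B *ᵥ w
        invFun := fun w => Binv *ᵥ w
        left_inv := fun w => by simp [Matrix.mulVec_mulVec, hBB']
        right_inv := fun w => by simp [Matrix.mulVec_mulVec, hBB] }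
    refine ⟨pB.trans (Equiv.addRight (Pi.single l 1)), ?_, ?_⟩
    · intro w
      have h1 : iotaMap r l w = (fun i => (w i : ℝ)) +
        Pi.single l ((((2 : ℝ) ^ r)⁻¹ - 1) * (w l : ℝ)) := rfl
      rw [hγ, h1, Matrix.mulVec_add, hcastmul, hcolR]
      funext i
      have h2 := hrow w
      simp only [iotaMap, Equiv.trans_apply, Equiv.coe_addRight, Pi.add_apply, pB, Equiv.coe_fn_mk]
      by_cases h : i = l
      · subst h; simp [h2]; ring
      · simp [h]
    · intro w
      simp only [Equiv.trans_apply, Equiv.coe_addRight, pB, Equiv.coe_fn_mk, map_add, hΨB, hΨ1]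
  have QT : ∀ v, Q (T v) (2 ^ r * v l, ψ v) := by
    intro v
    refine ⟨Equiv.addRight (sc v), ?_, ?_⟩
    · intro w
      rw [hTapp]
      funext i
      simp only [iotaMap, Equiv.coe_addRight, Pi.add_apply, sc]
      by_cases h : i = l
      · subst h; simp; field_simp; ring
      · simp [h]; ring
    · intro w
      simp only [Equiv.coe_addRight, map_add, hΨsc]
  have Qone : Q 1 0 := ⟨1, fun w => rfl, fun w => by simp⟩
  have Qmul : ∀ g h s t, Q g s → Q h t → Q (g * h) (s + t) := by
    rintro g h s t ⟨p, hp, hp'⟩ ⟨q, hq, hq'⟩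
    refine ⟨p * q, fun w => ?_, fun w => ?_⟩
    · rw [AffineEquiv.coe_mul, Function.comp_apply, hq, hp]; rfl
    · rw [Equiv.Perm.mul_apply, hp', hq']; abel
  have Qinv : ∀ g s, Q g s → Q g⁻¹ (-s) := by
    rintro g s ⟨p, hp, hp'⟩
    refine ⟨p⁻¹, fun w => ?_, fun w => ?_⟩
    · have := hp (p⁻¹ w)
      rw [show p (p⁻¹ w) = w from p.apply_symm_apply w] at this
      rw [← this]
      exact g.symm_apply_apply _
    · have := hp' (p⁻¹ w)
      rw [show p (p⁻¹ w) = w from p.apply_symm_apply w] at this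
      rw [this]; abel
  have Quniq : ∀ g s t, Q g s → Q g t → s = t := by
    rintro g s t ⟨p, hp, hp'⟩ ⟨q, hq, hq'⟩
    have h1 : p 0 = q 0 := iotaMap_injective r l (by rw [← hp, ← hq])
    have h2 := hp' 0
    rw [h1, hq'] at h2
    exact (add_left_cancel h2).symm
  have Qex : ∀ g ∈ Γ, ∃ t, Q g t := by
    intro g hg
    rw [hΓ] at hg
    induction hg using Subgroup.closure_induction with
    | mem x hx =>
      rcases hx with hx | ⟨v, rfl⟩
      · rw [Set.mem_singleton_iff] at hx; subst hx; exact ⟨_, Qγ⟩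
      · exact ⟨_, QT v⟩
    | one => exact ⟨_, Qone⟩
    | mul x y _ _ hx hy =>
      obtain ⟨s, hs⟩ := hx
      obtain ⟨t, ht⟩ := hy
      exact ⟨_, Qmul _ _ _ _ hs ht⟩
    | inv x _ hx =>
      obtain ⟨s, hs⟩ := hx
      exact ⟨_, Qinv _ _ hs⟩
  choose φ0 hφ0 using fun g : Γ => Qex g.1 g.2
  let φ : Γ →* Multiplicative (ℤ × (β → ZMod 2)) :=
    { toFun := fun g => Multiplicative.ofAdd (φ0 g)
      map_one' := by
        rw [Quniq _ _ _ (hφ0 1) Qone]; rfl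
      map_mul' := fun g h => by
        rw [Quniq _ _ _ (hφ0 (g * h)) (Qmul _ _ _ _ (hφ0 g) (hφ0 h))]; rfl }
  have hφ : ∀ (g : Γ) t, Q g t → φ g = Multiplicative.ofAdd t := fun g t ht =>
    congrArg Multiplicative.ofAdd (Quniq _ _ _ (hφ0 g) ht)
  have γmem : γ ∈ Γ := by rw [hΓ]; exact Subgroup.subset_closure (Or.inl rfl)
  have Tmem : ∀ v, T v ∈ Γ := fun v => by
    rw [hΓ]; exact Subgroup.subset_closure (Or.inr ⟨v, rfl⟩)
  let γ' : Γ := ⟨γ, γmem⟩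
  let T' : (Fin n → ℤ) → Γ := fun v => ⟨T v, Tmem v⟩
  have hT'add : ∀ v w, T' (v + w) = T' v * T' w := by
    intro v w
    apply Subtype.ext
    apply AffineEquiv.ext
    intro x
    change T (v + w) x = T v (T w x)
    rw [hTapp, hTapp, hTapp]
    funext i; simp [add_assoc]
  have hT'zero : T' 0 = 1 := by
    apply Subtype.ext
    apply AffineEquiv.ext
    intro x
    change T 0 x = x
    rw [hTapp]
    funext i; simp
  have hconj : ∀ v, γ' * T' v = T' (B *ᵥ v) * γ' := by
    intro v
    apply Subtype.ext
    apply AffineEquiv.ext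
    intro x
    change γ (T v x) = T (B *ᵥ v) (γ x)
    rw [hTapp, hTapp, hγ, hγ, Matrix.mulVec_add, hcastmul, add_assoc]
  have hpowγ : ∀ (m : ℕ) x, (γ ^ m) x =
      (B.map (Int.castRingHom ℝ)) ^ m *ᵥ x + Pi.single l ((m : ℝ) * ((2 : ℝ) ^ r)⁻¹) := by
    intro m
    induction m with
    | zero => intro x; simp
    | succ m ih =>
      intro x
      rw [pow_succ', AffineEquiv.coe_mul, Function.comp_apply, ih, hγ, Matrix.mulVec_add, hcolR,
        Matrix.mulVec_mulVec, ← pow_succ', add_assoc, ← Pi.single_add]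
      congr 2
      push_cast; ring
  have hγpow : γ' ^ (2 ^ r) = T' (Pi.single l 1) := by
    apply Subtype.ext
    apply AffineEquiv.ext
    intro x
    change (γ ^ (2 ^ r)) x = T (Pi.single l 1) x
    have h1 : (B.map (Int.castRingHom ℝ)) ^ (2 ^ r) = 1 := by
      have := congrArg (RingHom.mapMatrix (Int.castRingHom ℝ)) hpow
      rw [map_pow, map_one] at this
      exact this
    rw [hpowγ, h1, Matrix.one_mulVec, hTapp, add_comm]
    congr 1
    funext i
    by_cases h : i = l
    · subst h; simp
    · simp [h]
  -- the translation hom to the abelianization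
  let f : (Fin n → ℤ) →+ Additive (Abelianization Γ) :=
    { toFun := fun v => Additive.ofMul (Abelianization.of (T' v))
      map_zero' := by rw [hT'zero, map_one]; rfl
      map_add' := fun v w => by rw [hT'add, map_mul]; rfl }
  have hfB : ∀ w, f (B *ᵥ w) = f w := by
    intro w
    have := congrArg Abelianization.of (hconj w)
    rw [map_mul, map_mul, mul_comm] at this
    exact congrArg Additive.ofMul (mul_right_cancel this).symm
  obtain ⟨hf1, hf2⟩ := hf _ f hfB
  let a : Additive (Abelianization Γ) := Additive.ofMul (Abelianization.of γ')
  have hfl : f (Pi.single l 1) = (2 ^ r) • a := by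
    have := congrArg Abelianization.of hγpow
    rw [map_pow] at this
    exact congrArg Additive.ofMul this.symm
  let τ : β → (ZMod 2 →+ Additive (Abelianization Γ)) := fun b =>
    ZMod.lift 2 ⟨zmultiplesHom _ (f (Pi.single (rep b) 1)), by
      simp only [zmultiplesHom_apply]
      have := hf1 b
      rw [← two_zsmul] at this
      exact_mod_cast this⟩
  have hτ : ∀ b, τ b 1 = f (Pi.single (rep b) 1) := by
    intro b
    have := ZMod.lift_coe 2 (⟨zmultiplesHom _ (f (Pi.single (rep b) 1)), by
      simp only [zmultiplesHom_apply]
      have := hf1 b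
      rw [← two_zsmul] at this
      exact_mod_cast this⟩ : { f : ℤ →+ Additive (Abelianization Γ) // f (2 : ℕ) = 0 }) 1
    simpa using this
  let θ : ℤ × (β → ZMod 2) →+ Additive (Abelianization Γ) :=
    (zmultiplesHom _ a).coprod (∑ b, (τ b).comp (Pi.evalAddMonoidHom (fun _ : β => ZMod 2) b))
  have hθ1 : ∀ m : ℤ, θ (m, 0) = m • a := by
    intro m; simp [θ]
  have hθ2 : ∀ b, θ (0, Pi.single b 1) = f (Pi.single (rep b) 1) := by
    intro b
    simp only [θ, AddMonoidHom.coprod_apply, map_zero, zero_add, AddMonoidHom.finsetSum_apply,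
      AddMonoidHom.comp_apply, Pi.evalAddMonoidHom_apply]
    rw [Finset.sum_eq_single b]
    · simp [hτ]
    · intro c _ hc; simp [hc]
    · simp
  have hθT : ∀ v, θ (2 ^ r * v l, ψ v) = f v := by
    let F : (Fin n → ℤ) →+ Additive (Abelianization Γ) :=
      θ.comp (((AddMonoidHom.mulLeft ((2:ℤ) ^ r)).comp
        (Pi.evalAddMonoidHom (fun _ : Fin n => ℤ) l)).prod ψ)
    have : F = f := by
      refine AddMonoidHom.functions_ext' _ _ _ fun i => ?_
      ext
      change θ (2 ^ r * (Pi.single i 1 : Fin n → ℤ) l, ψ (Pi.single i 1)) = f (Pi.single i 1)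
      by_cases h : i = l
      · subst h
        rw [hψl, hθ1, hfl]
        simp only [Pi.single_eq_same, mul_one]
        exact_mod_cast natCast_zsmul a (2 ^ r)
      · obtain ⟨b, hb, hb'⟩ := hf2 i h
        rw [hb, hb', ← hθ2 b]
        simp [Ne.symm h]
    intro v
    exact DFunLike.congr_fun this v
  -- surjectivity and injectivity
  let Φ : Abelianization Γ →* Multiplicative (ℤ × (β → ZMod 2)) := Abelianization.lift φ
  have hΦof : ∀ g, Φ (Abelianization.of g) = φ g := fun g => Abelianization.lift_apply_of φ g
  let Θ : Multiplicative (ℤ × (β → ZMod 2)) →* Abelianization Γ := θ.toMultiplicativeLeft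
  have hφT : ∀ v, φ (T' v) = Multiplicative.ofAdd (2 ^ r * v l, ψ v) := fun v => hφ _ _ (QT v)
  have hφγ : φ γ' = Multiplicative.ofAdd (1, 0) := hφ _ _ Qγ
  have hleft : ∀ g : Γ, Θ (φ g) = Abelianization.of g := by
    have key : ∀ g (hg : g ∈ Γ), Θ (φ ⟨g, hg⟩) = Abelianization.of ⟨g, hg⟩ := by
      intro g hg
      have hg' := hg
      rw [hΓ] at hg'
      induction hg' using Subgroup.closure_induction with
      | mem x hx =>
        rcases hx with hx | ⟨v, rfl⟩
        · rw [Set.mem_singleton_iff] at hx; subst hx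
          change Θ (φ γ') = Abelianization.of γ'
          rw [hφγ]
          have := hθ1 1
          rw [one_smul] at this
          exact this
        · change Θ (φ (T' v)) = Abelianization.of (T' v)
          rw [hφT]
          exact hθT v
      | one =>
        change Θ (φ 1) = Abelianization.of 1
        simp
      | mul x y hx' hy' hx hy =>
        rw [← hΓ] at hx' hy'
        change Θ (φ (⟨x, hx'⟩ * ⟨y, hy'⟩)) = Abelianization.of (⟨x, hx'⟩ * ⟨y, hy'⟩)
        rw [map_mul, map_mul, map_mul, hx, hy]
      | inv x hx' hx =>
        rw [← hΓ] at hx'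
        change Θ (φ (⟨x, hx'⟩⁻¹)) = Abelianization.of (⟨x, hx'⟩⁻¹)
        rw [map_inv, map_inv, map_inv, hx]
    exact fun g => key g.1 g.2
  have hinj : Function.Injective Φ := by
    apply Function.LeftInverse.injective (g := Θ)
    intro x
    induction x using QuotientGroup.induction_on with
    | H g => exact (congrArg Θ (hΦof g)).trans (hleft g)
  have hright : (MonoidHom.toAdditiveLeft Φ).comp θ = AddMonoidHom.id _ := by
    apply AddMonoidHom.ext
    rintro ⟨m, s⟩
    have e1 : (m, s) = m • ((1 : ℤ), (0 : β → ZMod 2)) +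
        ∑ b, (s b).val • ((0 : ℤ), (Pi.single b 1 : β → ZMod 2)) := by
      apply Prod.ext
      · simp [Prod.fst_sum]
      · simp only [Prod.snd_add, Prod.smul_mk, Prod.snd_sum, smul_zero, zero_add]
        funext c
        simp only [Finset.sum_apply, Pi.smul_apply, Pi.single_apply, Pi.add_apply, Pi.zero_apply]
        simp
    rw [e1, map_add, map_add, map_zsmul, map_zsmul, map_sum, map_sum]
    have e2 : ((MonoidHom.toAdditiveLeft Φ).comp θ) (1, 0) = (1, 0) := by
      rw [AddMonoidHom.comp_apply, hθ1, one_smul]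
      exact (hΦof γ').trans hφγ
    have e3 : ∀ b, ((MonoidHom.toAdditiveLeft Φ).comp θ) (0, Pi.single b 1) =
        (0, Pi.single b 1) := by
      intro b
      rw [AddMonoidHom.comp_apply, hθ2]
      refine ((hΦof _).trans (hφT _)).trans ?_
      rw [hrep]
      simp [(hrepl b)]
      rfl
    rw [e2]
    congr 1
    refine Finset.sum_congr rfl fun b _ => ?_
    rw [map_nsmul, e3]; rfl
  have hsurj : Function.Surjective Φ := fun t =>
    ⟨Θ t, DFunLike.congr_fun hright t⟩
  exact ⟨MulEquiv.ofBijective Φ ⟨hinj, hsurj⟩⟩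

end Core

section Blocks

/-- Properties of a diagonal block used in the computation. -/
structure GoodBlock {ι : Type} [Fintype ι] [DecidableEq ι] (N : ℕ) (M : Matrix ι ι ℤ) : Prop where
  pow_eq : M ^ N = -1
  colsum : ∀ j, ((∑ i, M i j : ℤ) : ZMod 2) = 1
  conn : ∀ (A : Type) [AddCommGroup A] (f : (ι → ℤ) →+ A), (∀ w, f (M *ᵥ w) = f w) →
    ∀ i j, f (Pi.single i 1) = f (Pi.single j 1)

lemma GoodBlock.reindex {ι κ : Type} [Fintype ι] [DecidableEq ι] [Fintype κ] [DecidableEq κ]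
    {N : ℕ} {M : Matrix ι ι ℤ} (h : GoodBlock N M) (e : ι ≃ κ) :
    GoodBlock N (Matrix.reindex e e M) where
  pow_eq := by
    have : Matrix.reindex e e M = Matrix.reindexAlgEquiv ℤ ℤ e M := rfl
    rw [this, ← map_pow, h.pow_eq, map_neg, map_one]
  colsum j := by
    rw [← h.colsum (e.symm j)]
    congr 1
    exact (Equiv.sum_comp e.symm (fun i => M i (e.symm j)))
  conn A _ f hf i j := by
    let g : (ι → ℤ) →+ A :=
      { toFun := fun w => f (w ∘ e.symm)
        map_zero' := by
          have : (0 : ι → ℤ) ∘ e.symm = 0 := rfl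
          rw [this, map_zero]
        map_add' := fun v w => by
          have : (v + w) ∘ e.symm = v ∘ e.symm + w ∘ e.symm := rfl
          rw [this, map_add] }
    have hg : ∀ w, g (M *ᵥ w) = g w := by
      intro w
      change f ((M *ᵥ w) ∘ e.symm) = f (w ∘ e.symm)
      rw [← hf (w ∘ e.symm)]
      congr 1
      rw [Matrix.reindex_apply, Matrix.submatrix_mulVec_equiv]
      congr 2
      funext i; simp
    have hs : ∀ k : κ, g (Pi.single (e.symm k) 1) = f (Pi.single k 1) := by
      intro k
      change f ((Pi.single (e.symm k) 1 : ι → ℤ) ∘ e.symm) = _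
      congr 1
      funext x
      simp [Pi.single_apply]
    rw [← hs, ← hs]
    exact h.conn A g hg _ _

lemma goodBlock_J (r : ℕ) : GoodBlock (2 ^ r) (Jmat r) := by
  induction r with
  | zero =>
    refine ⟨?_, ?_, ?_⟩
    · ext i j
      have hi : i = j := Subsingleton.elim (α := Fin 1) i j
      subst hi
      simp [Jmat]
    · intro j
      have : ∀ i, Jmat 0 i j = -1 := fun i => rfl
      simp only [this]
      decide
    · intro A _ f _ i j
      have hi : i = j := Subsingleton.elim (α := Fin 1) i j
      rw [hi]
  | succ r ih =>
    rw [Jmat]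
    apply GoodBlock.reindex
    refine ⟨?_, ?_, ?_⟩
    · rw [pow_succ', pow_mul]
      have h1 : (Matrix.fromBlocks 0 (Jmat r) 1 0) ^ 2 =
          Matrix.fromBlocks (Jmat r) 0 0 (Jmat r) := by
        rw [pow_two, Matrix.fromBlocks_multiply]; simp
      rw [h1, Matrix.fromBlocks_diagonal_pow, ih.pow_eq, ← Matrix.fromBlocks_one,
        Matrix.fromBlocks_neg]
      simp
    · rintro (j | j)
      · simp [Matrix.one_apply]
      · simpa using ih.colsum j
    · intro A _ f hf
      let g : (Fin (2 ^ r) → ℤ) →+ A :=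
        { toFun := fun w => f (Sum.elim w 0)
          map_zero' := by
            rw [← map_zero f]; congr 1; funext i; cases i <;> rfl
          map_add' := fun v w => by
            rw [← map_add]; congr 1; funext i; cases i <;> simp }
      have hR : ∀ w, f (Sum.elim (0 : Fin (2 ^ r) → ℤ) w) = g w := by
        intro w
        change _ = f (Sum.elim w 0)
        rw [← hf (Sum.elim w 0), Matrix.fromBlocks_mulVec]
        simp
      have hg : ∀ w, g (Jmat r *ᵥ w) = g w := by
        intro w
        rw [← hR w, ← hf (Sum.elim 0 w), Matrix.fromBlocks_mulVec]
        simp [g]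
      have hc := ih.conn A g hg
      have key : ∀ i : Fin (2 ^ r) ⊕ Fin (2 ^ r), ∃ i', f (Pi.single i 1) = g (Pi.single i' 1) := by
        rintro (i | i)
        · refine ⟨i, ?_⟩
          change _ = f (Sum.elim (Pi.single i 1) 0)
          rw [Sum.elim_single_zero]
        · refine ⟨i, ?_⟩
          rw [← hR, Sum.elim_zero_single]
      intro i j
      obtain ⟨i', hi⟩ := key i
      obtain ⟨j', hj⟩ := key j
      rw [hi, hj, hc i' j']

lemma Cmat_mulVec_single_lt (r : ℕ) (j : ℕ) (hj : j + 1 < 2 ^ r) :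
    Cmat r *ᵥ Pi.single ⟨j, by omega⟩ 1 = Pi.single ⟨j + 1, hj⟩ 1 := by
  funext i
  simp only [Matrix.mulVec_single_one, Matrix.col_apply, Cmat, Matrix.of_apply, Pi.single_apply,
    Fin.ext_iff]
  have : ¬ (j = 2 ^ r - 1) := by omega
  simp [this]

lemma Cmat_mulVec_single_last (r : ℕ) :
    Cmat r *ᵥ Pi.single ⟨2 ^ r - 1, by have := Nat.two_pow_pos r; omega⟩ 1 =
      -Pi.single ⟨0, Nat.two_pow_pos r⟩ 1 := by
  funext i
  have h0 := i.2
  have h1 : ¬ ((i : ℕ) = 2 ^ r - 1 + 1) := by omega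
  simp only [Matrix.mulVec_single_one, Matrix.col_apply, Cmat, Matrix.of_apply, Pi.single_apply,
    Fin.ext_iff, Pi.neg_apply, h1]
  by_cases h : (i : ℕ) = 0 <;> simp [h]

lemma goodBlock_C (r : ℕ) : GoodBlock (2 ^ r) (Cmat r) := by
  have hN : 0 < 2 ^ r := Nat.two_pow_pos r
  have hp : ∀ m (hm : m < 2 ^ r), Cmat r ^ m *ᵥ Pi.single ⟨0, hN⟩ 1 = Pi.single ⟨m, hm⟩ 1 := by
    intro m
    induction m with
    | zero => intro hm; rw [pow_zero, Matrix.one_mulVec]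
    | succ m ih =>
      intro hm
      rw [pow_succ', ← Matrix.mulVec_mulVec, ih (by omega), Cmat_mulVec_single_lt]
  have hp2 : Cmat r ^ (2 ^ r) *ᵥ Pi.single ⟨0, hN⟩ 1 = -Pi.single ⟨0, hN⟩ 1 := by
    have h1 := hp (2 ^ r - 1) (by omega)
    have h2 := Cmat_mulVec_single_last r
    rw [← h1, Matrix.mulVec_mulVec, ← pow_succ', Nat.sub_add_cancel hN] at h2
    exact h2
  refine ⟨?_, ?_, ?_⟩
  · have h3 : ∀ j, Cmat r ^ (2 ^ r) *ᵥ Pi.single j 1 = (-1 : Matrix _ _ ℤ) *ᵥ Pi.single j 1 := by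
      intro j
      rw [← hp j.1 j.2, Matrix.mulVec_mulVec, ← pow_add, add_comm, pow_add,
        ← Matrix.mulVec_mulVec, hp2, Matrix.mulVec_neg, Matrix.neg_mulVec, Matrix.one_mulVec]
    ext i j
    have := congrFun (h3 j) i
    simpa only [Matrix.mulVec_single_one, Matrix.col_apply] using this
  · intro j
    have h4 : (∑ i, Cmat r i j : ℤ) = ∑ i, (Cmat r *ᵥ Pi.single j 1) i := by
      simp only [Matrix.mulVec_single_one, Matrix.col_apply]
    rw [h4]
    by_cases h : j.1 + 1 < 2 ^ r
    · rw [Cmat_mulVec_single_lt r j.1 h]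
      simp
    · have hj : j = ⟨2 ^ r - 1, by omega⟩ := Fin.ext (by have := j.2; simp; omega)
      rw [hj, Cmat_mulVec_single_last]
      simp only [Pi.neg_apply, Finset.sum_neg_distrib, Finset.sum_pi_single', Finset.mem_univ,
        if_true]
      decide
  · intro A _ f hf
    have key : ∀ m (hm : m < 2 ^ r), f (Pi.single ⟨m, hm⟩ 1) = f (Pi.single ⟨0, hN⟩ 1) := by
      intro m
      induction m with
      | zero => intro _; rfl
      | succ m ih =>
        intro hm
        rw [← Cmat_mulVec_single_lt r m hm, hf, ih]
    intro i j
    exact (key i.1 i.2).trans (key j.1 j.2).symm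

lemma col_lemma {X : Type} [Fintype X] [DecidableEq X] {n : ℕ} {s : X → ℕ}
    (M : (x : X) → Matrix (Fin (s x)) (Fin (s x)) ℤ)
    (e : (Σ x : X, Fin (s x)) ≃ Fin n) (x : X) (j : Fin (s x)) :
    (Matrix.reindex e e (Matrix.blockDiagonal' M)) *ᵥ Pi.single (e ⟨x, j⟩) 1 =
      ∑ i, M x i j • (Pi.single (e ⟨x, i⟩) 1 : Fin n → ℤ) := by
  funext k
  obtain ⟨⟨y, i⟩, rfl⟩ := e.surjective k
  rw [Finset.sum_apply]
  simp only [Matrix.mulVec_single_one, Matrix.col_apply, Matrix.reindex_apply,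
    Matrix.submatrix_apply, Equiv.symm_apply_apply, Matrix.blockDiagonal'_apply, Pi.smul_apply,
    Pi.single_apply, e.injective.eq_iff]
  by_cases h : y = x
  · subst h
    simp
  · simp [h]

end Blocks

section Assembly

variable (r : ℕ) (k k' : ℕ → ℕ) (j₁ : ℕ)

/-- the nontrivial blocks -/
abbrev NtIx : Type := (Σ i : Fin (r - 2), (Fin (k (i.val + 2)) ⊕ Fin (k' (i.val + 2)))) ⊕ Fin j₁

/-- inclusion of the nontrivial blocks -/
def ntToIx : NtIx r k k' j₁ → BlockIx r k k' j₁
  | Sum.inl x => Sum.inl x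
  | Sum.inr x => Sum.inr (Sum.inl x)

lemma ntToIx_injective : Function.Injective (ntToIx r k k' j₁) := by
  rintro (x | x) (y | y) h
  · exact congrArg Sum.inl (Sum.inl.inj h)
  · cases h
  · cases h
  · exact congrArg Sum.inr (Sum.inl.inj (Sum.inr.inj h))

lemma ix_cases (x : BlockIx r k k' j₁) :
    x = Sum.inr (Sum.inr ()) ∨ ∃ b, x = ntToIx r k k' j₁ b := by
  rcases x with x | x | ⟨⟩
  · exact Or.inr ⟨Sum.inl x, rfl⟩
  · exact Or.inr ⟨Sum.inr x, rfl⟩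
  · exact Or.inl rfl

lemma ntToIx_ne (b : NtIx r k k' j₁) : ntToIx r k k' j₁ b ≠ Sum.inr (Sum.inr ()) := by
  rcases b with b | b <;> intro h <;> cases h

lemma blockSize_pos (x : BlockIx r k k' j₁) : 0 < blockSize r k k' j₁ x := by
  rcases x with ⟨i, x⟩ | x | x <;> exact Nat.two_pow_pos _

lemma good_block (hr : 2 ≤ r) (b : NtIx r k k' j₁) :
    ∃ m, m + 1 ≤ r ∧ GoodBlock (2 ^ m) (blockMat r k k' j₁ (ntToIx r k k' j₁ b)) := by
  rcases b with ⟨i, x | x⟩ | x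
  · exact ⟨i.val + 2, by have := i.2; omega, goodBlock_C _⟩
  · exact ⟨i.val + 2, by have := i.2; omega, goodBlock_J _⟩
  · exact ⟨1, by omega, goodBlock_J _⟩

lemma card_ntIx (j : ℕ → ℕ) (hr : 2 ≤ r)
    (hj : ∀ i, 2 ≤ i → i ≤ r - 1 → j i = k i + k' i) :
    Fintype.card (NtIx r k k' (j 1)) = ∑ i ∈ Finset.Icc 1 (r - 1), j i := by
  obtain ⟨s, rfl⟩ : ∃ s, r = s + 2 := ⟨r - 2, by omega⟩
  rw [Fintype.card_sum, Fintype.card_sigma, Fintype.card_fin]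
  simp only [Fintype.card_sum, Fintype.card_fin]
  have h1 : Finset.Icc 1 (s + 2 - 1) = Finset.Ico 1 (s + 2) := by
    ext x; simp; omega
  rw [h1, Finset.sum_eq_sum_Ico_succ_bot (by omega), add_comm, Finset.sum_Ico_eq_sum_range,
    ← Fin.sum_univ_eq_sum_range (fun i => j (1 + 1 + i))]
  congr 1
  refine Finset.sum_congr rfl fun i _ => ?_
  have hi : i.val < s := i.2
  rw [show 1 + 1 + i.val = i.val + 2 by omega, hj _ (by omega) (by omega)]

lemma assembly (hr : 2 ≤ r) (n : ℕ) (l : Fin n) (B : GL (Fin n) ℤ)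
    (e : (Σ x : BlockIx r k k' j₁, Fin (blockSize r k k' j₁ x)) ≃ Fin n)
    (he : e ⟨Sum.inr (Sum.inr ()), ⟨0, Nat.one_pos⟩⟩ = l)
    (hB : (B : Matrix (Fin n) (Fin n) ℤ) =
      Matrix.reindex e e (Matrix.blockDiagonal' (blockMat r k k' j₁)))
    (γ : (Fin n → ℝ) ≃ᵃ[ℝ] (Fin n → ℝ))
    (hγ : ∀ x, γ x = (B : Matrix (Fin n) (Fin n) ℤ).map (Int.castRingHom ℝ) *ᵥ x +
      Pi.single l (((2 : ℝ) ^ r)⁻¹))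
    (Γ : Subgroup ((Fin n → ℝ) ≃ᵃ[ℝ] (Fin n → ℝ)))
    (hΓ : Γ = Subgroup.closure ({γ} ∪
        Set.range (fun v : Fin n → ℤ =>
          AffineEquiv.constVAdd ℝ (Fin n → ℝ) (fun i => (v i : ℝ))))) :
    Nonempty (Abelianization Γ ≃* Multiplicative (ℤ × (NtIx r k k' j₁ → ZMod 2))) := by
  have hcol : ∀ x j, (B : Matrix (Fin n) (Fin n) ℤ) *ᵥ Pi.single (e ⟨x, j⟩) 1 =
      ∑ i, blockMat r k k' j₁ x i j • (Pi.single (e ⟨x, i⟩) 1 : Fin n → ℤ) := by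
    intro x j
    rw [hB]
    exact col_lemma _ e x j
  have hlcase : ∀ i : Fin n, i = l ∨ ∃ b p, i = e ⟨ntToIx r k k' j₁ b, p⟩ := by
    intro i
    obtain ⟨⟨x, p⟩, rfl⟩ := e.surjective i
    rcases ix_cases r k k' j₁ x with rfl | ⟨b, rfl⟩
    · left
      rw [← he]
      congr 2
      exact Subsingleton.elim (α := Fin 1) _ _
    · exact Or.inr ⟨b, p, rfl⟩
  have hne : ∀ b p, e ⟨ntToIx r k k' j₁ b, p⟩ ≠ l := by
    intro b p h
    rw [← he] at h
    have := congrArg Sigma.fst (e.injective h)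
    exact ntToIx_ne r k k' j₁ b this
  have hcl : (B : Matrix (Fin n) (Fin n) ℤ) *ᵥ Pi.single l 1 = Pi.single l 1 := by
    have h1 := hcol (Sum.inr (Sum.inr ())) ⟨0, Nat.one_pos⟩
    rw [he] at h1
    rw [h1]
    have h2 : ∀ i : Fin (blockSize r k k' j₁ (Sum.inr (Sum.inr ()))),
        i = ⟨0, Nat.one_pos⟩ := fun i => Subsingleton.elim (α := Fin 1) _ _
    rw [Fintype.sum_eq_single ⟨0, Nat.one_pos⟩ (fun i hi => absurd (h2 i) hi), he]
    have h3 : blockMat r k k' j₁ (Sum.inr (Sum.inr ())) ⟨0, Nat.one_pos⟩ ⟨0, Nat.one_pos⟩ = 1 :=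
      rfl
    rw [h3, one_smul]
  let ψ : (Fin n → ℤ) →+ (NtIx r k k' j₁ → ZMod 2) :=
    { toFun := fun w b => ∑ p, (w (e ⟨ntToIx r k k' j₁ b, p⟩) : ZMod 2)
      map_zero' := by funext b; simp
      map_add' := fun v w => by funext b; simp [Finset.sum_add_distrib] }
  have hψapp : ∀ w b, ψ w b = ∑ p, (w (e ⟨ntToIx r k k' j₁ b, p⟩) : ZMod 2) := fun _ _ => rfl
  have hψl : ψ (Pi.single l 1) = 0 := by
    funext b
    rw [hψapp]
    simp [hne]
  have hψs : ∀ b p, ψ (Pi.single (e ⟨ntToIx r k k' j₁ b, p⟩) 1) = Pi.single b 1 := by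
    intro b p
    funext c
    rw [hψapp]
    by_cases h : c = b
    · subst h
      simp [Pi.single_apply]
    · have h' : ntToIx r k k' j₁ c ≠ ntToIx r k k' j₁ b :=
        fun h2 => h (ntToIx_injective r k k' j₁ h2)
      simp [Pi.single_apply, h, h']
  refine core_abelianization r l (B : Matrix (Fin n) (Fin n) ℤ)
    ((B⁻¹ : GL (Fin n) ℤ) : Matrix (Fin n) (Fin n) ℤ) (by simp) (by simp) ?_ hcl ?_ ψ ?_ hψl
    (fun b => e ⟨ntToIx r k k' j₁ b, ⟨0, blockSize_pos _ _ _ _ _⟩⟩) (fun b => hψs b _)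
    (fun b => hne b _) ?_ γ hγ Γ hΓ
  · have h1 : Matrix.reindex e e (Matrix.blockDiagonal' (blockMat r k k' j₁)) =
      Matrix.reindexAlgEquiv ℤ ℤ e (Matrix.blockDiagonal' (blockMat r k k' j₁)) := rfl
    have h2 : blockMat r k k' j₁ ^ (2 ^ r) = 1 := by
      funext x
      rw [Pi.pow_apply]
      rcases ix_cases r k k' j₁ x with rfl | ⟨b, rfl⟩
      · exact one_pow _
      · obtain ⟨m, hm, hg⟩ := good_block r k k' j₁ hr b
        have h3 : 2 ^ r = 2 ^ m * (2 * 2 ^ (r - (m + 1))) := by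
          rw [← pow_succ', ← pow_add]; congr 1; omega
        rw [h3, pow_mul, hg.pow_eq, pow_mul, neg_one_sq, one_pow]; rfl
    rw [hB, h1, ← map_pow, ← Matrix.blockDiagonal'_pow, h2, Matrix.blockDiagonal'_one, map_one]
  · let F : (Fin n → ℤ) →+ ℤ := (Pi.evalAddMonoidHom (fun _ : Fin n => ℤ) l).comp
      (Matrix.mulVecLin (B : Matrix (Fin n) (Fin n) ℤ)).toAddMonoidHom
    have : F = Pi.evalAddMonoidHom (fun _ : Fin n => ℤ) l := by
      refine AddMonoidHom.functions_ext' _ _ _ fun i => ?_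
      ext
      change ((B : Matrix (Fin n) (Fin n) ℤ) *ᵥ Pi.single i 1) l = (Pi.single i 1 : Fin n → ℤ) l
      rcases hlcase i with rfl | ⟨b, p, rfl⟩
      · rw [hcl]
      · rw [hcol, Finset.sum_apply]
        simp [Pi.single_apply, fun b p => (hne b p).symm]
    intro w
    exact DFunLike.congr_fun this w
  · let F : (Fin n → ℤ) →+ (NtIx r k k' j₁ → ZMod 2) := ψ.comp
      (Matrix.mulVecLin (B : Matrix (Fin n) (Fin n) ℤ)).toAddMonoidHom
    have : F = ψ := by
      refine AddMonoidHom.functions_ext' _ _ _ fun i => ?_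
      apply AddMonoidHom.ext_int
      change ψ ((B : Matrix (Fin n) (Fin n) ℤ) *ᵥ Pi.single i 1) = ψ (Pi.single i 1)
      rcases hlcase i with rfl | ⟨b, p, rfl⟩
      · rw [hcl]
      · obtain ⟨m, hm, hg⟩ := good_block r k k' j₁ hr b
        rw [hcol, map_sum]
        simp only [map_zsmul, hψs]
        rw [← Finset.sum_smul]
        funext c
        rw [Pi.smul_apply, zsmul_eq_mul, hg.colsum, one_mul]
    intro w
    exact DFunLike.congr_fun this w
  · intro A _ f hf
    have main : ∀ b, (∀ p q, f (Pi.single (e ⟨ntToIx r k k' j₁ b, p⟩) 1) =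
        f (Pi.single (e ⟨ntToIx r k k' j₁ b, q⟩) 1)) ∧
        ∀ p, f (Pi.single (e ⟨ntToIx r k k' j₁ b, p⟩) 1) +
          f (Pi.single (e ⟨ntToIx r k k' j₁ b, p⟩) 1) = 0 := by
      intro b
      obtain ⟨m, hm, hg⟩ := good_block r k k' j₁ hr b
      let x := ntToIx r k k' j₁ b
      let g : (Fin (blockSize r k k' j₁ x) → ℤ) →+ A :=
        { toFun := fun u => ∑ i, u i • f (Pi.single (e ⟨x, i⟩) 1)
          map_zero' := by simp
          map_add' := fun u v => by simp [add_smul, Finset.sum_add_distrib] }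
      have hgs : ∀ i, g (Pi.single i 1) = f (Pi.single (e ⟨x, i⟩) 1) := by
        intro i
        change ∑ i', (Pi.single i 1 : _ → ℤ) i' • f (Pi.single (e ⟨x, i'⟩) 1) = _
        rw [Fintype.sum_eq_single i (fun i' h => by simp [h])]
        simp
      have hgM : ∀ w, g (blockMat r k k' j₁ x *ᵥ w) = g w := by
        let F := g.comp (Matrix.mulVecLin (blockMat r k k' j₁ x)).toAddMonoidHom
        have : F = g := by
          refine AddMonoidHom.functions_ext' _ _ _ fun i => ?_
          apply AddMonoidHom.ext_int
          change g (blockMat r k k' j₁ x *ᵥ Pi.single i 1) = g (Pi.single i 1)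
          rw [hgs, ← hf, hcol, map_sum]
          simp only [map_zsmul]
          change ∑ i', (blockMat r k k' j₁ x *ᵥ Pi.single i 1) i' • _ = _
          simp only [Matrix.mulVec_single_one, Matrix.col_apply]
        intro w
        exact DFunLike.congr_fun this w
      have hpw : ∀ t w, g (blockMat r k k' j₁ x ^ t *ᵥ w) = g w := by
        intro t
        induction t with
        | zero => intro w; rw [pow_zero, Matrix.one_mulVec]
        | succ t ih => intro w; rw [pow_succ', ← Matrix.mulVec_mulVec, hgM, ih]
      refine ⟨fun p q => ?_, fun p => ?_⟩
      · have := hg.conn A g hgM p q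
        rwa [hgs, hgs] at this
      · have := hpw (2 ^ m) (Pi.single p 1)
        rw [hg.pow_eq, Matrix.neg_mulVec, Matrix.one_mulVec, map_neg, hgs] at this
        exact add_eq_zero_iff_neg_eq.mpr this
    refine ⟨fun b => (main b).2 _, fun i hi => ?_⟩
    rcases hlcase i with rfl | ⟨b, p, rfl⟩
    · exact absurd rfl hi
    · exact ⟨b, hψs b p, (main b).1 _ _⟩

end Assembly

/-- **First homology of the `ℤ_{2^r}`-manifolds `M_{k(r)}` in the family `𝓕`.**
With `B` the block-diagonal matrix above (of size `n = 2^{r−1} j_{r−1} + ⋯ + 4 j_2 + 2 j_1 + 1`,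
the final `1 × 1` block sitting in the last coordinate), and `Γ` the Bieberbach group generated
by `γ : x ↦ Bx + (1/2^r) eₙ` and the translations by `ℤ^n`, the abelianization of `Γ`
(that is, `H₁(M, ℤ)` for `M = Γ\ℝ^n`) is `ℤ × (ℤ/2ℤ)^{j_{r−1} + ⋯ + j_2 + j_1}`. -/
theorem abelianization_of_Z2r_manifold_group
    (r : ℕ) (hr : 2 ≤ r) (k k' j : ℕ → ℕ)
    (hj : ∀ i, 2 ≤ i → i ≤ r - 1 → j i = k i + k' i)
    (hj1 : Odd (j 1)) (hj1pos : 1 ≤ j 1) (hjr : 1 ≤ j (r - 1))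
    (n : ℕ) (hn : n = (∑ i ∈ Finset.Icc 1 (r - 1), 2 ^ i * j i) + 1)
    (B : GL (Fin n) ℤ)
    (e : (Σ x : BlockIx r k k' (j 1), Fin (blockSize r k k' (j 1) x)) ≃ Fin n)
    (he : e ⟨Sum.inr (Sum.inr ()), ⟨0, Nat.one_pos⟩⟩ = ⟨n - 1, by omega⟩)
    (hB : (B : Matrix (Fin n) (Fin n) ℤ) =
      Matrix.reindex e e (Matrix.blockDiagonal' (blockMat r k k' (j 1)))) :
    let Bℝ : GL (Fin n) ℝ := Units.map (RingHom.mapMatrix (Int.castRingHom ℝ)).toMonoidHom B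
    let γ : (Fin n → ℝ) ≃ᵃ[ℝ] (Fin n → ℝ) :=
      (LinearMap.GeneralLinearGroup.toLinearEquiv
        (Matrix.GeneralLinearGroup.toLin Bℝ)).toAffineEquiv.trans
        (AffineEquiv.constVAdd ℝ (Fin n → ℝ)
          (Pi.single (⟨n - 1, by omega⟩ : Fin n) (((2 : ℝ) ^ r)⁻¹)))
    let Γ : Subgroup ((Fin n → ℝ) ≃ᵃ[ℝ] (Fin n → ℝ)) :=
      Subgroup.closure ({γ} ∪
        Set.range (fun v : Fin n → ℤ =>
          AffineEquiv.constVAdd ℝ (Fin n → ℝ) (fun i => (v i : ℝ))))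
    Nonempty (Abelianization Γ ≃*
      Multiplicative (ℤ × (Fin (∑ i ∈ Finset.Icc 1 (r - 1), j i) → ZMod 2))) := by
  intro Bℝ γ Γ
  have hcard := card_ntIx r k k' j hr hj
  obtain ⟨E⟩ := assembly r k k' (j 1) hr n ⟨n - 1, by omega⟩ B e he hB γ (fun x => by
    rw [add_comm]
    rfl) Γ rfl
  let q : NtIx r k k' (j 1) ≃ Fin (∑ i ∈ Finset.Icc 1 (r - 1), j i) := Fintype.equivFinOfCardEq hcard
  let P : (NtIx r k k' (j 1) → ZMod 2) ≃+ (Fin (∑ i ∈ Finset.Icc 1 (r - 1), j i) → ZMod 2) :=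
    (LinearEquiv.funCongrLeft (ZMod 2) (ZMod 2) q.symm).toAddEquiv
  exact ⟨E.trans (AddEquiv.toMultiplicative ((AddEquiv.refl ℤ).prodCongr P))⟩
end

section
/- Let r ≥ 2, let j_1 be an odd positive integer, and let j_i ≥ 0 be integers for 2 ≤ i ≤ r − 1. Then ∑_{k ∈ I_{2^r}^*} cot(kπ/2^r) · cot(kπ/4)^{j_1} · ∏_{i=2}^{r−1} ( ∏_{j ∈ I_{2^i}^*} cot(jkπ/2^{i+1}) )^{j_i} = 2^{r−1}, where the outer sum is over the odd integers k with 1 ≤ k ≤ 2^r − 1 and each inner product is over the odd integers j with 1 ≤ j ≤ 2^i − 1. (All angles occurring are not integer multiples of π, so every cotangent is defined.) -/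
theorem aux_sin_ne (a s : ℕ) (ha : Odd a) : Real.sin ((a : ℝ) * Real.pi / 2 ^ (s + 1)) ≠ 0 := by
  intro h
  obtain ⟨n, hn⟩ := Real.sin_eq_zero_iff.1 h
  have hp := Real.pi_ne_zero
  have h2 : (n : ℝ) * 2 ^ (s + 1) = a := by
    field_simp at hn
    linarith
  have h3 : n * 2 ^ (s + 1) = (a : ℤ) := by exact_mod_cast h2
  obtain ⟨m, rfl⟩ := ha
  push_cast [pow_succ] at h3
  have h4 : n * (2 ^ s * 2) = 2 * (n * 2 ^ s) := by ring
  omega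

theorem aux_cos_odd (k : ℕ) (hk : Odd k) : Real.cos ((k : ℝ) * Real.pi / 2) = 0 := by
  obtain ⟨m, rfl⟩ := hk
  rw [Real.cos_eq_zero_iff]
  exact ⟨m, by push_cast; ring⟩

theorem aux_cot_sq (k : ℕ) (hk : Odd k) : Real.cot ((k : ℝ) * Real.pi / 4) ^ 2 = 1 := by
  have h1 := aux_cos_odd k hk
  have h2 : (k : ℝ) * Real.pi / 2 = 2 * (k * Real.pi / 4) := by ring
  have h3 := aux_sin_ne k 1 hk
  norm_num at h3
  rw [h2, Real.cos_two_mul'] at h1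
  rw [Real.cot_eq_cos_div_sin, div_pow, div_eq_one_iff_eq (pow_ne_zero 2 h3)]
  linarith

theorem aux_inner (k i : ℕ) (hk : Odd k) (hi : 2 ≤ i) :
    (∏ l ∈ (Finset.range (2 ^ i)).filter (fun l => Odd l),
      Real.cot ((l : ℝ) * (k : ℝ) * Real.pi / 2 ^ (i + 1))) = 1 := by
  have he : ∃ c, 2 ^ i = 4 * c := ⟨2 ^ (i - 2), by
    rw [show (4 : ℕ) = 2 ^ 2 by norm_num, ← pow_add]; congr 1; omega⟩
  obtain ⟨c, hc⟩ := he
  refine Finset.prod_involution (fun l _ => 2 ^ i - l) ?_ ?_ ?_ ?_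
  · intro l hl
    simp only [Finset.mem_filter, Finset.mem_range] at hl
    obtain ⟨hl, hlo⟩ := hl
    have hlo' : Odd (2 ^ i - l) := by
      rw [Nat.odd_iff] at *
      omega
    have s1 := aux_sin_ne (l * k) i (hlo.mul hk)
    have s2 := aux_sin_ne ((2 ^ i - l) * k) i (hlo'.mul hk)
    have h0 := aux_cos_odd k hk
    have hs : (k : ℝ) * Real.pi / 2 = ((l * k : ℕ) : ℝ) * Real.pi / 2 ^ (i + 1)
        + (((2 ^ i - l) * k : ℕ) : ℝ) * Real.pi / 2 ^ (i + 1) := by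
      rw [Nat.cast_mul, Nat.cast_mul, Nat.cast_sub hl.le]
      push_cast
      field_simp
      ring
    rw [hs, Real.cos_add] at h0
    rw [← Nat.cast_mul, ← Nat.cast_mul, Real.cot_eq_cos_div_sin, Real.cot_eq_cos_div_sin,
      div_mul_div_comm, div_eq_one_iff_eq (mul_ne_zero s1 s2)]
    linarith
  · intro l hl _ h
    simp only [Finset.mem_filter, Finset.mem_range, Nat.odd_iff] at hl
    omega
  · intro l hl
    simp only [Finset.mem_filter, Finset.mem_range, Nat.odd_iff] at hl ⊢
    omega
  · intro l hl
    simp only [Finset.mem_filter, Finset.mem_range, Nat.odd_iff] at hl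
    omega

theorem aux_sum (s : ℕ) :
    ∑ k ∈ (Finset.range (2 ^ (s + 2))).filter (fun k => Odd k),
      Real.cot ((k : ℝ) * Real.pi / 2 ^ (s + 2)) * Real.cot ((k : ℝ) * Real.pi / 4)
      = 2 ^ (s + 1) := by
  induction s with
  | zero =>
    have : (Finset.range (2 ^ (0 + 2))).filter (fun k => Odd k) = {1, 3} := by decide
    rw [this, Finset.sum_pair (by norm_num)]
    have h1 := aux_cot_sq 1 (by decide)
    have h3 := aux_cot_sq 3 (by decide)
    norm_num at h1 h3 ⊢
    rw [← sq, ← sq]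
    rcases h1 with h1 | h1 <;> rcases h3 with h3 | h3 <;> rw [h1, h3] <;> norm_num
  | succ s ih =>
    rw [Finset.sum_filter] at ih ⊢
    rw [show 2 ^ (s + 1 + 2) = 2 ^ (s + 2) + 2 ^ (s + 2) by ring, Finset.sum_range_add,
      ← Finset.sum_add_distrib, pow_succ (2 : ℝ) (s + 1), ← ih, Finset.sum_mul]
    refine Finset.sum_congr rfl fun k _ => ?_
    have hpar : Odd (2 ^ (s + 2) + k) ↔ Odd k := by
      rw [Nat.odd_iff, Nat.odd_iff, pow_succ]; omega
    simp only [hpar]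
    split_ifs with hk
    swap
    · simp
    have e1 : ((2 ^ (s + 2) + k : ℕ) : ℝ) * Real.pi / 2 ^ (s + 1 + 2)
        = (k : ℝ) * Real.pi / 2 ^ (s + 1 + 2) + Real.pi / 2 := by
      push_cast
      field_simp
      ring
    have e2 : ((2 ^ (s + 2) + k : ℕ) : ℝ) * Real.pi / 4
        = (k : ℝ) * Real.pi / 4 + (2 ^ s : ℕ) * Real.pi := by
      push_cast
      ring
    have e3 : (k : ℝ) * Real.pi / 2 ^ (s + 2) = 2 * ((k : ℝ) * Real.pi / 2 ^ (s + 1 + 2)) := by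
      field_simp
      ring
    have c2 : Real.cot ((k : ℝ) * Real.pi / 4 + (2 ^ s : ℕ) * Real.pi)
        = Real.cot ((k : ℝ) * Real.pi / 4) := by
      rw [Real.cot_eq_cos_div_sin, Real.cot_eq_cos_div_sin, Real.cos_add_nat_mul_pi,
        Real.sin_add_nat_mul_pi, mul_div_mul_left]
      exact pow_ne_zero _ (by norm_num)
    have hs := aux_sin_ne k (s + 1) hk
    rw [e1, e2, c2]
    rw [show s + 1 + 1 = s + 2 by ring, e3] at hs
    rw [e3]
    generalize (k : ℝ) * Real.pi / 2 ^ (s + 1 + 2) = x at *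
    rw [← add_mul, mul_right_comm]
    congr 1
    simp only [Real.cot_eq_cos_div_sin, Real.cos_add_pi_div_two, Real.sin_add_pi_div_two,
      Real.cos_two_mul', Real.sin_two_mul] at *
    have ha : Real.sin x ≠ 0 := fun h => hs (by rw [h]; ring)
    have hb : Real.cos x ≠ 0 := fun h => hs (by rw [h]; ring)
    field_simp
    ring

open Real in
/-- **The cotangent-sum identity underlying Donnelly's η-formula for `ℤ_{2^r}`-manifolds.**
Let `r ≥ 2`, let `j₁` be an odd positive integer, and let `j i ≥ 0` for `2 ≤ i ≤ r − 1`.  Then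
`∑_{k ∈ I_{2^r}^*} cot(kπ/2^r) · cot(kπ/4)^{j₁} ·
    ∏_{i=2}^{r−1} (∏_{j ∈ I_{2^i}^*} cot(jkπ/2^{i+1}))^{j i} = 2^(r−1)`,
where the outer sum is over the odd integers `k` with `1 ≤ k ≤ 2^r − 1` and each inner
product is over the odd integers `j` with `1 ≤ j ≤ 2^i − 1`. -/
theorem sum_cot_prod_cot_eq_two_pow
    (r : ℕ) (hr : 2 ≤ r) (j₁ : ℕ) (hj₁ : Odd j₁) (hj₁0 : 0 < j₁) (j : ℕ → ℕ) :
    ∑ k ∈ (Finset.range (2 ^ r)).filter (fun k => Odd k),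
        Real.cot ((k : ℝ) * π / 2 ^ r) * Real.cot ((k : ℝ) * π / 4) ^ j₁ *
          ∏ i ∈ Finset.Icc 2 (r - 1),
            (∏ l ∈ (Finset.range (2 ^ i)).filter (fun l => Odd l),
                Real.cot ((l : ℝ) * (k : ℝ) * π / 2 ^ (i + 1))) ^ (j i) =
      2 ^ (r - 1) := by
  obtain ⟨s, rfl⟩ : ∃ s, r = s + 2 := ⟨r - 2, by omega⟩
  rw [show s + 2 - 1 = s + 1 by omega, ← aux_sum s]
  refine Finset.sum_congr rfl fun k hk => ?_
  have hk := (Finset.mem_filter.1 hk).2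
  rw [Finset.prod_eq_one, mul_one]
  · obtain ⟨m, rfl⟩ := hj₁
    rw [pow_succ _ (2 * m), pow_mul, aux_cot_sq k hk, one_pow, one_mul]
  · intro i hi
    rw [aux_inner k i hk (Finset.mem_Icc.1 hi).1, one_pow]
end
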